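/- arXiv:0809.2320 — 2 statements merged into one kernel-verified Lean document; each statement's English description precedes it below -/
import Mathlib

section
/- Let n ≥ 1. Two nilpotent elements of so(2n+1,ℂ) are conjugate under SO(2n+1,ℂ) if and only if they have the same Jordan type; moreover, a partition of 2n+1 is the Jordan type of a nilpotent element of so(2n+1,ℂ) if and only if it is 1-admissible. Consequently, the Jordan type induces a bijection between the set of nilpotent SO(2n+1,ℂ)-orbits in so(2n+1,ℂ) and the set of 1-admissible partitions of 2n+1. -/
/-!
A skew matrix `X` over `ℂ` is studied through its `GL`-conjugacy class, and everything specific to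
the orthogonal group is extracted from one fact: an invertible symmetric matrix `h` has a symmetric
square root `s` that is a polynomial in `h` (`exists_symm_sqrt`). Modulo the characteristic
polynomial of `h`, such a polynomial exists up to a nilpotent error by Lagrange interpolation of
square roots at the eigenvalues, and Newton's method removes the error.

*Uniqueness.* If `g X g⁻¹ = Y` with `X`, `Y` skew and `g` invertible, then `h = gᵀ g` is symmetric
and commutes with `X`, hence so does its square root `s`, and `g s⁻¹` is an orthogonal matrix
conjugating `X` to `Y` (`exists_orthogonal_of_conj`). In odd dimension its determinant can be made
`1` by a sign. Conjugacy of nilpotent matrices with equal kernel dimensions comes from the structure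
theorem for finitely generated `ℂ[X]`-modules killed by a power of `X`: the module is a product of
cyclic modules `ℂ[X] / (X ^ kⱼ)`, `dim ker f ^ i = ∑ⱼ min kⱼ i`, and these sums determine the `kⱼ`
because the multiplicity of `p ≥ 1` is minus their second difference at `p`.

*Admissibility.* By the same second difference, the multiplicity of an even `p` is congruent mod `2`
to `rank X ^ (p - 1) + rank X ^ (p + 1)`. Both powers are odd, hence skew, and a skew matrix has
even rank (`even_rank_of_skew`).

*Existence.* It suffices to find `J` nilpotent of the given type and `S` symmetric invertible with
`Jᵀ S = -S J`: conjugating `J` by a symmetric square root of `S` makes it skew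
(`exists_skew_conj`). Such pairs are closed under direct sums. A single odd block carries the
antidiagonal form with alternating signs; a pair of equal blocks `J`, `-Jᵀ` carries the hyperbolic
form. An admissible partition is a sum of odd parts and of pairs of equal even parts.
-/

open Matrix


/-- A partition is `ε`-admissible if every even part (when `ε = 1`), respectively every
odd part (when `ε = -1`), occurs with even multiplicity. -/
def EpsAdmissible {m : ℕ} (ε : ℤ) (d : Nat.Partition m) : Prop :=
  ∀ p : ℕ, ((ε = 1 ∧ Even p) ∨ (ε = -1 ∧ Odd p)) → Even (Multiset.count p d.parts)

/-- A square complex matrix `X` has Jordan type the partition `d` if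
`dim ker (X^i) = Σ_j min (d_j, i)` for all `i ≥ 0`. -/
def MatJordanType {N : ℕ} (X : Matrix (Fin N) (Fin N) ℂ) {m : ℕ} (d : Nat.Partition m) : Prop :=
  ∀ i : ℕ, Module.finrank ℂ (LinearMap.ker (Matrix.mulVecLin X ^ i)) =
    (d.parts.map (fun p => min p i)).sum

/-- `so(N, ℂ)`: complex antisymmetric `N × N` matrices. -/
def soSet (N : ℕ) : Set (Matrix (Fin N) (Fin N) ℂ) := {X | Xᵀ = -X}

/-- `SO(N, ℂ)`: complex special orthogonal group. -/
def SOSet (N : ℕ) : Set (Matrix (Fin N) (Fin N) ℂ) := {g | gᵀ * g = 1 ∧ g.det = 1}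


open Polynomial

/-! ### Sums of truncated parts -/

/-- The sum of the parts of `s` truncated at `i`; when `s` is the Jordan type of `X`, this is
`dim ker X ^ i`. -/
def minSum (s : Multiset ℕ) (i : ℕ) : ℕ := (s.map (fun p => min p i)).sum

lemma minSum_cons (a : ℕ) (s : Multiset ℕ) (i : ℕ) :
    minSum (a ::ₘ s) i = min a i + minSum s i := by simp [minSum]

lemma minSum_second_difference (s : Multiset ℕ) (p : ℕ) (hp : 1 ≤ p) :
    minSum s (p + 1) + minSum s (p - 1) + s.count p = 2 * minSum s p := by
  induction s using Multiset.induction_on with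
  | empty => simp [minSum]
  | cons a s ih =>
    rw [minSum_cons, minSum_cons, minSum_cons, Multiset.count_cons]
    split_ifs <;> omega

/-! ### Symmetric square roots -/

/-- The class of `X` is a square in `ℂ[X] / (m)` as soon as it is invertible there. -/
lemma exists_polynomial_sq_sub_X_dvd (m : ℂ[X]) (hm : m.Monic) (h0 : m.eval 0 ≠ 0) :
    ∃ p : ℂ[X], m ∣ p ^ 2 - X := by
  classical
  choose r hr using fun z : ℂ => IsAlgClosed.exists_pow_nat_eq z (n := 2) (by norm_num)
  set q : ℂ[X] := Lagrange.interpolate m.roots.toFinset id r with hq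
  have hqr : ∀ z ∈ m.roots, q.eval z = r z := fun z hz => by
    have := Lagrange.eval_interpolate_at_node (s := m.roots.toFinset) (v := id) r
      (Set.injOn_id _) (Multiset.mem_toFinset.2 hz)
    exact this
  -- `q ^ 2 - X` vanishes at every root of `m`, so it is nilpotent modulo `m`.
  have hdvd : m ∣ (q ^ 2 - X) ^ Multiset.card m.roots := by
    conv_lhs => rw [(IsAlgClosed.splits m).eq_prod_roots_of_monic hm]
    rw [← Multiset.prod_replicate, ← Multiset.map_const']
    refine Multiset.prod_dvd_prod_of_dvd _ _ fun z hz => ?_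
    rw [dvd_iff_isRoot]
    simp [hqr z hz, hr]
  have hcop : IsCoprime q m := by
    rw [isCoprime_iff_aeval_ne_zero_of_isAlgClosed ℂ ℂ]
    intro z
    by_contra! h
    simp only [coe_aeval_eq_eval] at h
    have hz : z ∈ m.roots := (mem_roots hm.ne_zero).2 h.2
    have h1 := hr z
    rw [← hqr z hz, h.1] at h1
    apply h0
    have : z = 0 := by simpa using h1.symm
    simpa [this] using h.2
  have hunit : IsUnit (AdjoinRoot.mk m q) := by
    obtain ⟨a, b, hab⟩ := hcop
    refine IsUnit.of_mul_eq_one (AdjoinRoot.mk m a) ?_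
    rw [← map_mul, ← map_one (AdjoinRoot.mk m), AdjoinRoot.mk_eq_mk]
    exact ⟨-b, by linear_combination hab⟩
  have key := ExistsUnique.exists
    (existsUnique_nilpotent_sub_and_aeval_eq_zero
    (P := (X ^ 2 - C (AdjoinRoot.root m) : (AdjoinRoot m)[X])) (x := AdjoinRoot.mk m q) ?_ ?_)
  · obtain ⟨t, -, ht⟩ := key
    obtain ⟨p, rfl⟩ := AdjoinRoot.mk_surjective t
    refine ⟨p, ?_⟩
    rw [← AdjoinRoot.mk_eq_zero]
    simpa using ht
  · refine ⟨Multiset.card m.roots, ?_⟩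
    rw [← AdjoinRoot.mk_eq_zero] at hdvd
    simpa using hdvd
  · have h2 : IsUnit (2 : AdjoinRoot m) := by
      have := (IsUnit.mk0 (2 : ℂ) (by norm_num)).map (AdjoinRoot.of m)
      rwa [map_ofNat] at this
    simpa [one_add_one_eq_two] using h2.mul hunit

/-- An invertible symmetric complex matrix `h` has a symmetric invertible square root commuting with
everything that commutes with `h`. -/
lemma exists_symm_sqrt {ι : Type*} [Fintype ι] [DecidableEq ι] (h : Matrix ι ι ℂ)
    (hT : hᵀ = h) (hu : IsUnit h) :
    ∃ s : Matrix ι ι ℂ, sᵀ = s ∧ s * s = h ∧ IsUnit s ∧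
      ∀ A : Matrix ι ι ℂ, Commute h A → Commute s A := by
  obtain ⟨p, hp⟩ := exists_polynomial_sq_sub_X_dvd h.charpoly h.charpoly_monic (by
    rw [eval_charpoly]
    simp only [map_zero, zero_sub, det_neg]
    exact mul_ne_zero (by simp) ((isUnit_iff_isUnit_det _).1 hu).ne_zero)
  have hs : aeval h p * aeval h p = h := by
    obtain ⟨c, hc⟩ := hp
    have := congrArg (aeval h) hc
    rw [map_mul, aeval_self_charpoly, zero_mul] at this
    simpa [sq, sub_eq_zero] using this
  refine ⟨aeval h p, ?_, hs, ?_, ?_⟩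
  · rw [aeval_eq_sum_range, transpose_sum]
    simp [transpose_smul, transpose_pow, hT]
  · rw [isUnit_iff_isUnit_det] at hu ⊢
    rw [← hs, det_mul] at hu
    exact isUnit_of_mul_isUnit_left hu
  · intro A hA
    rw [aeval_eq_sum_range]
    exact Commute.sum_left _ _ _ fun i _ => (hA.pow_left i).smul_left _

/-- Skew matrices conjugate under the general linear group are conjugate under the orthogonal group:
in the polar decomposition `g = k s` with `s * s = gᵀ * g`, the factor `s` commutes with `X`. -/
lemma exists_orthogonal_of_conj {ι : Type*} [Fintype ι] [DecidableEq ι] {X Y g : Matrix ι ι ℂ}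
    (hX : Xᵀ = -X) (hY : Yᵀ = -Y) (hg : IsUnit g) (hgX : g * X = Y * g) :
    ∃ k : Matrix ι ι ℂ, kᵀ * k = 1 ∧ k * X = Y * k := by
  have hXg : X * gᵀ = gᵀ * Y := by
    have := congrArg transpose hgX
    simpa [transpose_mul, hX, hY] using this
  have hgT : IsUnit gᵀ := by simpa [isUnit_iff_isUnit_det] using hg
  obtain ⟨s, hsT, hss, hsu, hcomm⟩ := exists_symm_sqrt (gᵀ * g) (by simp [transpose_mul])
    (hgT.mul hg)
  have hsX : s * X = X * s := hcomm X (by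
    rw [Commute, SemiconjBy, mul_assoc, hgX, ← mul_assoc, ← hXg, mul_assoc])
  have hsdet : IsUnit s.det := (isUnit_iff_isUnit_det _).1 hsu
  have h1 : s⁻¹ * X = X * s⁻¹ := by
    calc s⁻¹ * X = s⁻¹ * (X * s) * s⁻¹ := by
          rw [mul_assoc, mul_nonsing_inv_cancel_right _ _ hsdet]
      _ = X * s⁻¹ := by rw [← hsX, nonsing_inv_mul_cancel_left _ _ hsdet]
  refine ⟨g * s⁻¹, ?_, ?_⟩
  · calc (g * s⁻¹)ᵀ * (g * s⁻¹) = s⁻¹ * (gᵀ * g) * s⁻¹ := by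
          rw [transpose_mul, transpose_nonsing_inv, hsT]; simp only [mul_assoc]
      _ = 1 := by
          rw [← hss, nonsing_inv_mul_cancel_left _ _ hsdet, mul_nonsing_inv _ hsdet]
  · rw [mul_assoc, h1, ← mul_assoc, hgX, mul_assoc]

/-- A matrix skew for the symmetric form `S` is similar to one that is skew for the standard form. -/
lemma exists_skew_conj {ι : Type*} [Fintype ι] [DecidableEq ι] {J S : Matrix ι ι ℂ}
    (hS : Sᵀ = S) (hSu : IsUnit S) (hJ : Jᵀ * S = -(S * J)) :
    ∃ s : Matrix ι ι ℂ, IsUnit s.det ∧ (s * J * s⁻¹)ᵀ = -(s * J * s⁻¹) := by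
  obtain ⟨s, hsT, hss, hsu, -⟩ := exists_symm_sqrt S hS hSu
  have hsdet : IsUnit s.det := (isUnit_iff_isUnit_det _).1 hsu
  refine ⟨s, hsdet, ?_⟩
  have h1 : Jᵀ * s = -(s * s * J * s⁻¹) := by
    rw [hss, ← neg_mul, ← hJ, ← hss, ← mul_assoc, mul_nonsing_inv_cancel_right _ _ hsdet]
  rw [transpose_mul, transpose_mul, transpose_nonsing_inv, hsT, h1, mul_neg]
  simp only [mul_assoc, nonsing_inv_mul_cancel_left _ _ hsdet]

/-- In a basis adapted to the kernel, a skew form becomes `fromBlocks T₁₁ 0 0 0` with `T₁₁` skew and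
invertible, which forces `T₁₁` to have even size. -/
lemma even_rank_of_skew {ι : Type*} [Fintype ι] [DecidableEq ι] {A : Matrix ι ι ℂ}
    (hA : Aᵀ = -A) : Even A.rank := by
  obtain ⟨V, U, e, hV, hU, h⟩ := exists_rank_normal_form A
  have hVdet : IsUnit V.det := (isUnit_iff_isUnit_det _).1 hV
  have hUdet : IsUnit U.det := (isUnit_iff_isUnit_det _).1 hU
  set T : Matrix _ _ ℂ := (Uᵀ * V⁻¹).submatrix e.symm e.symm with hT
  have hB : (Uᵀ * A * U).submatrix e.symm e.symm = T * fromBlocks 1 0 0 0 := by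
    have : Uᵀ * A * U = (Uᵀ * V⁻¹) * (V * A * U) := by
      simp only [mul_assoc, nonsing_inv_mul_cancel_left _ _ hVdet]
    rw [this, h, hT, submatrix_mul _ _ _ e.symm _ e.symm.bijective]
    simp
  have hskew : (T * fromBlocks 1 0 0 0)ᵀ = -(T * fromBlocks 1 0 0 0) := by
    rw [← hB, transpose_submatrix, transpose_mul, transpose_mul, transpose_transpose, hA]
    ext i j
    simp [mul_assoc]
  have hTdet : T.det ≠ 0 := by
    rw [hT, det_submatrix_equiv_self, det_mul, det_transpose]
    exact (hUdet.mul ((isUnit_nonsing_inv_det V hVdet))).ne_zero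
  rw [← fromBlocks_toBlocks T] at hskew hTdet
  simp only [fromBlocks_multiply, fromBlocks_transpose, fromBlocks_neg, fromBlocks_inj] at hskew
  simp at hskew
  have h11 := hskew.1
  have h21 := hskew.2
  rw [h21, det_fromBlocks_zero₂₁] at hTdet
  have h3 := congrArg det h11
  rw [det_transpose, det_neg, Fintype.card_fin] at h3
  by_contra hodd
  rw [Nat.not_even_iff_odd] at hodd
  rw [hodd.neg_one_pow] at h3
  apply left_ne_zero_of_mul hTdet
  linear_combination h3 / 2

/-! ### Structure of nilpotent endomorphisms -/

lemma finrank_ker_pow_succ_le {V : Type*} [AddCommGroup V] [Module ℂ V] [FiniteDimensional ℂ V]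
    (f : Module.End ℂ V) (hk : Module.finrank ℂ (LinearMap.ker f) ≤ 1) (i : ℕ) :
    Module.finrank ℂ (LinearMap.ker (f ^ (i + 1))) ≤
      Module.finrank ℂ (LinearMap.ker (f ^ i)) + 1 := by
  have hm : ∀ x ∈ LinearMap.ker (f ^ (i + 1)), f x ∈ LinearMap.ker (f ^ i) := fun x hx => by
    simpa [pow_succ] using hx
  have h := LinearMap.finrank_range_add_finrank_ker (f.restrict hm)
  have h1 := Submodule.finrank_le (LinearMap.range (f.restrict hm))
  have h2 : Module.finrank ℂ (LinearMap.ker (f.restrict hm)) ≤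
      Module.finrank ℂ (LinearMap.ker f) := by
    refine LinearMap.finrank_le_finrank_of_injective
      (f := ((LinearMap.ker (f ^ (i + 1))).subtype ∘ₗ
        (LinearMap.ker (f.restrict hm)).subtype).codRestrict (LinearMap.ker f) ?_) ?_
    · rintro ⟨x, hx⟩
      simpa using congrArg Subtype.val hx
    · intro x y hxy
      have h : ((x : LinearMap.ker (f ^ (i + 1))) : V) = (y : LinearMap.ker (f ^ (i + 1))) :=
        congrArg (fun z : LinearMap.ker f => (z : V)) hxy
      exact Subtype.ext (Subtype.ext h)
  omega

/-- For a nilpotent with at most one Jordan block, the dimensions of `ker f ^ i` increase by at most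
one at each step and reach `dim V` at step `p = dim V`, so every step up to `p` is exactly one. -/
lemma finrank_ker_pow_of_cyclic {V : Type*} [AddCommGroup V] [Module ℂ V] [FiniteDimensional ℂ V]
    (f : Module.End ℂ V) (p : ℕ) (hp : Module.finrank ℂ V = p) (hf : f ^ p = 0)
    (hk : Module.finrank ℂ (LinearMap.ker f) ≤ 1) (i : ℕ) :
    Module.finrank ℂ (LinearMap.ker (f ^ i)) = min p i := by
  have step := finrank_ker_pow_succ_le f hk
  have h0 : Module.finrank ℂ (LinearMap.ker (f ^ 0)) = 0 := by
    rw [pow_zero, Module.End.one_eq_id, LinearMap.ker_id, finrank_bot]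
  have htop : ∀ j, p ≤ j → Module.finrank ℂ (LinearMap.ker (f ^ j)) = p := fun j hj => by
    rw [pow_eq_zero_of_le hj hf, LinearMap.ker_zero, finrank_top, hp]
  have up : ∀ j, Module.finrank ℂ (LinearMap.ker (f ^ j)) ≤ j := fun j => by
    induction j with
    | zero => omega
    | succ j ih => have := step j; omega
  have lo : ∀ i j, Module.finrank ℂ (LinearMap.ker (f ^ (i + j))) ≤
      Module.finrank ℂ (LinearMap.ker (f ^ i)) + j := fun i j => by
    induction j with
    | zero => simp
    | succ j ih => have := step (i + j); rw [← add_assoc]; omega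
  rcases le_total p i with h | h
  · rw [htop i h, min_eq_left h]
  · have h1 := lo i (p - i)
    rw [Nat.add_sub_cancel' h, htop p le_rfl] at h1
    have := up i
    omega

/-- Kernel dimensions of the powers of `X` on a module isomorphic to `ℂ[X] / (X ^ k)`, presented as
a quotient `π` of `ℂ[X]`. -/
lemma finrank_ker_lsmul_pow {M : Type*} [AddCommGroup M] [Module ℂ M] [Module ℂ[X] M]
    [IsScalarTower ℂ ℂ[X] M] (k : ℕ) (hk : 0 < k) (π : ℂ[X] →ₗ[ℂ[X]] M)
    (hπ : Function.Surjective π) (hker : LinearMap.ker π = Submodule.span ℂ[X] {(X : ℂ[X]) ^ k})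
    (hfin : Module.finrank ℂ M = k) (i : ℕ) :
    Module.finrank ℂ (LinearMap.ker (Algebra.lsmul ℂ ℂ M (X : ℂ[X]) ^ i)) = min k i := by
  have : FiniteDimensional ℂ M := Module.finite_of_finrank_pos (by omega)
  have hzero : ∀ p, π p = 0 ↔ ∃ q, q * X ^ k = p := fun p => by
    rw [← LinearMap.mem_ker, hker, Submodule.mem_span_singleton]; rfl
  have hsmul : ∀ (p : ℂ[X]) (x : M), Algebra.lsmul ℂ ℂ M p x = p • x := fun _ _ => rfl
  refine finrank_ker_pow_of_cyclic _ k hfin ?_ ?_ i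
  · rw [← map_pow]
    ext x
    obtain ⟨p, rfl⟩ := hπ x
    rw [hsmul, LinearMap.zero_apply, ← map_smul, hzero]
    exact ⟨p, by simp [mul_comm]⟩
  · obtain ⟨k, rfl⟩ : ∃ j, k = j + 1 := ⟨k - 1, by omega⟩
    -- the kernel of `X` on `ℂ[X] / (X ^ (k + 1))` is the line through the class of `X ^ k`
    refine finrank_le_one ⟨π (X ^ k), ?_⟩ ?_
    · rw [LinearMap.mem_ker, hsmul, ← map_smul, hzero]
      exact ⟨1, by simp [pow_succ']⟩
    · rintro ⟨x, hx⟩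
      obtain ⟨p, rfl⟩ := hπ x
      rw [LinearMap.mem_ker, hsmul, ← map_smul, hzero] at hx
      obtain ⟨q, hq⟩ := hx
      have hp : p = q * X ^ k := by
        apply mul_left_cancel₀ (X_ne_zero (R := ℂ))
        simp only [smul_eq_mul] at hq
        rw [← hq]; ring
      refine ⟨q.coeff 0, Subtype.ext ?_⟩
      change q.coeff 0 • π (X ^ k) = π p
      rw [← algebraMap_smul ℂ[X] (q.coeff 0) (π (X ^ k)), ← map_smul, ← sub_eq_zero, ← map_sub,
        hzero]
      refine ⟨-q.divX, ?_⟩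
      conv_rhs => rw [hp, ← q.divX_mul_X_add]
      simp
      ring

/-- The primary decomposition over `ℂ[X]` may produce exponents equal to `0`, that is, zero modules;
these factors are dropped so that all exponents are positive. -/
lemma exists_equiv_pi_of_isNilpotent {V : Type*} [AddCommGroup V] [Module ℂ V]
    [FiniteDimensional ℂ V] (f : Module.End ℂ V) (hf : IsNilpotent f) :
    ∃ (ι : Type) (_ : Fintype ι) (k : ι → ℕ), (∀ j, 0 < k j) ∧
      Nonempty (Module.AEval' f ≃ₗ[ℂ[X]]
        (∀ j, ℂ[X] ⧸ Submodule.span ℂ[X] {(X : ℂ[X]) ^ k j})) := by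
  obtain ⟨N, hN⟩ := hf
  have htors : Module.IsTorsion' (Module.AEval' f) (Submonoid.powers (X : ℂ[X])) := by
    intro x
    refine ⟨⟨(X : ℂ[X]) ^ N, N, rfl⟩, ?_⟩
    obtain ⟨v, rfl⟩ := (Module.AEval'.of f).surjective x
    change (X ^ N : ℂ[X]) • (Module.AEval'.of f v) = 0
    rw [Module.AEval'.X_pow_smul_of, hN, zero_smul, map_zero]
  obtain ⟨d, k, ⟨e⟩⟩ := Module.torsion_by_prime_power_decomposition irreducible_X htors
  refine ⟨{j : Fin d // 0 < k j}, inferInstance, fun j => k j, fun j => j.2, ⟨?_⟩⟩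
  refine (e.trans (DirectSum.linearEquivFunOnFintype _ _ _)).trans (LinearEquiv.ofBijective
    (LinearMap.pi fun j : {j : Fin d // 0 < k j} => LinearMap.proj j.1) ⟨?_, ?_⟩)
  · intro x y hxy
    funext j
    by_cases hj : 0 < k j
    · exact congrFun hxy ⟨j, hj⟩
    · have : Submodule.span ℂ[X] {(X : ℂ[X]) ^ k j} = ⊤ := by
        simp [Nat.eq_zero_of_not_pos hj]
      have := Submodule.Quotient.subsingleton_iff.2 this
      exact Subsingleton.elim _ _
  · intro y
    refine ⟨fun j => if h : 0 < k j then y ⟨j, h⟩ else 0, ?_⟩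
    funext j
    simp [j.2]

lemma finrank_ker_pow_of_equiv_pi {V : Type*} [AddCommGroup V] [Module ℂ V]
    (f : Module.End ℂ V) {ι : Type} [Fintype ι] (M : ι → Type) [∀ j, AddCommGroup (M j)]
    [∀ j, Module ℂ (M j)] [∀ j, FiniteDimensional ℂ (M j)] [∀ j, Module ℂ[X] (M j)]
    [∀ j, IsScalarTower ℂ ℂ[X] (M j)] (e : Module.AEval' f ≃ₗ[ℂ[X]] (∀ j, M j)) (i : ℕ) :
    Module.finrank ℂ (LinearMap.ker (f ^ i)) =
      ∑ j, Module.finrank ℂ (LinearMap.ker (Algebra.lsmul ℂ ℂ (M j) (X : ℂ[X]) ^ i)) := by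
  let e' : V ≃ₗ[ℂ] (∀ j, M j) :=
    (Module.AEval'.of f).trans (e.restrictScalars ℂ)
  have he' : ∀ v, e' ((f ^ i) v) = (X : ℂ[X]) ^ i • e' v := fun v => by
    change e (Module.AEval'.of f ((f ^ i) • v)) = _
    rw [← Module.AEval'.X_pow_smul_of, map_smul]
    rfl
  rw [← Module.finrank_pi_fintype]
  refine LinearEquiv.finrank_eq (LinearEquiv.ofBijective (LinearMap.pi fun j =>
    ((LinearMap.proj j ∘ₗ e'.toLinearMap) ∘ₗ (LinearMap.ker (f ^ i)).subtype).codRestrict _ ?_)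
      ⟨?_, ?_⟩)
  · rintro ⟨v, hv⟩
    have := congrFun (he' v) j
    rw [LinearMap.mem_ker.1 hv, map_zero] at this
    rw [LinearMap.mem_ker, ← map_pow, Algebra.lsmul_coe]
    exact this.symm
  · intro x y hxy
    apply Subtype.ext
    apply e'.injective
    funext j
    exact congrArg Subtype.val (congrFun hxy j)
  · intro y
    refine ⟨⟨e'.symm fun j => (y j).1, ?_⟩, ?_⟩
    · rw [LinearMap.mem_ker]
      apply e'.injective
      rw [he', map_zero, LinearEquiv.apply_symm_apply]
      funext j
      have h : ∀ z : M j, z ∈ LinearMap.ker (Algebra.lsmul ℂ ℂ (M j) (X : ℂ[X]) ^ i) →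
          (X : ℂ[X]) ^ i • z = 0 := fun z hz => by
        rw [LinearMap.mem_ker, ← map_pow] at hz
        exact hz
      exact h _ (y j).2
    · funext j
      apply Subtype.ext
      simp

/-- Jordan normal form of a nilpotent endomorphism, together with its kernel dimensions. -/
lemma exists_kerdim_of_isNilpotent {V : Type*} [AddCommGroup V] [Module ℂ V]
    [FiniteDimensional ℂ V] (f : Module.End ℂ V) (hf : IsNilpotent f) :
    ∃ (ι : Type) (_ : Fintype ι) (k : ι → ℕ), (∀ j, 0 < k j) ∧
      Nonempty (Module.AEval' f ≃ₗ[ℂ[X]]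
        (∀ j, ℂ[X] ⧸ Submodule.span ℂ[X] {(X : ℂ[X]) ^ k j})) ∧
      ∀ i, Module.finrank ℂ (LinearMap.ker (f ^ i)) = ∑ j, min (k j) i := by
  obtain ⟨ι, _, k, hk, ⟨e⟩⟩ := exists_equiv_pi_of_isNilpotent f hf
  refine ⟨ι, inferInstance, k, hk, ⟨e⟩, fun i => ?_⟩
  have hfin (j : ι) : Module.finrank ℂ (ℂ[X] ⧸ Submodule.span ℂ[X] {(X : ℂ[X]) ^ k j}) = k j := by
    have := finrank_quotient_span_eq_natDegree (f := (X : ℂ[X]) ^ k j)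
    rwa [natDegree_X_pow] at this
  have (j : ι) : FiniteDimensional ℂ (ℂ[X] ⧸ Submodule.span ℂ[X] {(X : ℂ[X]) ^ k j}) :=
    Module.finite_of_finrank_pos (by rw [hfin]; exact hk j)
  rw [finrank_ker_pow_of_equiv_pi f _ e i]
  exact Finset.sum_congr rfl fun j _ => finrank_ker_lsmul_pow (k j) (hk j) (Submodule.mkQ _)
    (Submodule.mkQ_surjective _) (Submodule.ker_mkQ _) (hfin j) i

/-! ### Conjugacy and Jordan types -/

lemma count_eq_of_minSum_eq {s t : Multiset ℕ} (h : ∀ i, minSum s i = minSum t i) (p : ℕ)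
    (hp : 1 ≤ p) : s.count p = t.count p := by
  have h1 := minSum_second_difference s p hp
  have h2 := minSum_second_difference t p hp
  rw [h, h, h] at h1
  omega

lemma exists_equiv_of_sum_min_eq {ι κ : Type*} [Fintype ι] [Fintype κ] (k : ι → ℕ) (l : κ → ℕ)
    (hk : ∀ j, 0 < k j) (hl : ∀ j, 0 < l j)
    (h : ∀ i, ∑ j, min (k j) i = ∑ j, min (l j) i) : ∃ e : ι ≃ κ, k = l ∘ e := by
  classical
  have hcount : ∀ p, 1 ≤ p → (Finset.univ.val.map k).count p = (Finset.univ.val.map l).count p :=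
    count_eq_of_minSum_eq fun i => by
      rw [minSum, minSum, Multiset.map_map, Multiset.map_map]
      exact h i
  have hcard : ∀ p, Fintype.card {j // k j = p} = Fintype.card {j // l j = p} := fun p => by
    rcases Nat.eq_zero_or_pos p with rfl | hp
    · have : IsEmpty {j // k j = 0} := ⟨fun j => (hk j.1).ne' j.2⟩
      have : IsEmpty {j // l j = 0} := ⟨fun j => (hl j.1).ne' j.2⟩
      simp
    · have := hcount p hp
      rw [Multiset.count_map, Multiset.count_map] at this
      rw [Fintype.card_subtype, Fintype.card_subtype]
      simpa only [Finset.card_def, Finset.filter_val, eq_comm] using this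
  let e := Equiv.ofFiberEquiv fun p => Fintype.equivOfCardEq (hcard p)
  exact ⟨e, funext fun j => (Equiv.ofFiberEquiv_map _ j).symm⟩

/-- Nilpotent endomorphisms with equal kernel dimensions are conjugate. -/
lemma exists_linearEquiv_of_finrank_ker_eq {V : Type*} [AddCommGroup V] [Module ℂ V]
    [FiniteDimensional ℂ V] (f g : Module.End ℂ V) (hf : IsNilpotent f) (hg : IsNilpotent g)
    (h : ∀ i, Module.finrank ℂ (LinearMap.ker (f ^ i)) =
      Module.finrank ℂ (LinearMap.ker (g ^ i))) :
    ∃ φ : V ≃ₗ[ℂ] V, ∀ v, φ (f v) = g (φ v) := by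
  obtain ⟨ι, _, k, hk, ⟨e₁⟩, hfk⟩ := exists_kerdim_of_isNilpotent f hf
  obtain ⟨κ, _, l, hl, ⟨e₂⟩, hgl⟩ := exists_kerdim_of_isNilpotent g hg
  obtain ⟨σ, rfl⟩ := exists_equiv_of_sum_min_eq k l hk hl fun i => by rw [← hfk, ← hgl, h]
  let e : Module.AEval' f ≃ₗ[ℂ[X]] Module.AEval' g :=
    (e₁.trans (LinearEquiv.piCongrLeft ℂ[X]
      (fun j => ℂ[X] ⧸ Submodule.span ℂ[X] {(X : ℂ[X]) ^ l j}) σ)).trans e₂.symm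
  refine ⟨((Module.AEval'.of f).trans (e.restrictScalars ℂ)).trans (Module.AEval'.of g).symm,
    fun v => ?_⟩
  change (Module.AEval'.of g).symm (e (Module.AEval'.of f (f v))) =
    g ((Module.AEval'.of g).symm (e (Module.AEval'.of f v)))
  rw [← Module.AEval'.X_smul_of, map_smul, Module.AEval'.of_symm_X_smul]

lemma isNilpotent_mulVecLin {ι : Type*} [Fintype ι] [DecidableEq ι] {X : Matrix ι ι ℂ}
    (hX : IsNilpotent X) : IsNilpotent X.mulVecLin := by
  rw [← toLin'_apply']
  exact isNilpotent_toLin'_iff X |>.2 hX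

lemma exists_conj_of_finrank_ker_eq {ι : Type*} [Fintype ι] [DecidableEq ι] {X Y : Matrix ι ι ℂ}
    (hX : IsNilpotent X) (hY : IsNilpotent Y)
    (h : ∀ i, Module.finrank ℂ (LinearMap.ker (X.mulVecLin ^ i)) =
      Module.finrank ℂ (LinearMap.ker (Y.mulVecLin ^ i))) :
    ∃ g : Matrix ι ι ℂ, IsUnit g ∧ g * X = Y * g := by
  obtain ⟨φ, hφ⟩ := exists_linearEquiv_of_finrank_ker_eq _ _ (isNilpotent_mulVecLin hX)
    (isNilpotent_mulVecLin hY) h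
  refine ⟨LinearMap.toMatrix' φ.toLinearMap, ?_, ?_⟩
  · refine IsUnit.of_mul_eq_one (LinearMap.toMatrix' φ.symm.toLinearMap) ?_
    rw [← LinearMap.toMatrix'_comp]
    simp
  · apply toLin'.injective
    refine LinearMap.ext fun v => ?_
    simpa [toLin'_mul] using hφ v

lemma finrank_ker_add_rank_pow {ι : Type*} [Fintype ι] [DecidableEq ι] (X : Matrix ι ι ℂ) (i : ℕ) :
    Module.finrank ℂ (LinearMap.ker (X.mulVecLin ^ i)) + (X ^ i).rank = Fintype.card ι := by
  have h : X.mulVecLin ^ i = (X ^ i).mulVecLin := by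
    rw [← toLin'_apply', ← toLin'_apply', toLin'_pow]
  rw [h, Matrix.rank, add_comm, LinearMap.finrank_range_add_finrank_ker,
    Module.finrank_fintype_fun_eq_card]

lemma matJordanType_iff {N m : ℕ} (X : Matrix (Fin N) (Fin N) ℂ) (d : Nat.Partition m) :
    MatJordanType X d ↔ ∀ i, (X ^ i).rank + minSum d.parts i = N := by
  refine forall_congr' fun i => ?_
  have := finrank_ker_add_rank_pow X i
  rw [Fintype.card_fin] at this
  unfold minSum
  omega

/-- Every nilpotent matrix has a Jordan type. -/
lemma exists_matJordanType {N : ℕ} {X : Matrix (Fin N) (Fin N) ℂ} (hX : IsNilpotent X) :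
    ∃ d : Nat.Partition N, MatJordanType X d := by
  obtain ⟨ι, _, k, hk, -, h⟩ := exists_kerdim_of_isNilpotent _ (isNilpotent_mulVecLin hX)
  refine ⟨⟨Finset.univ.val.map k, fun hi => ?_, ?_⟩, fun i => ?_⟩
  · obtain ⟨j, -, rfl⟩ := Multiset.mem_map.1 hi
    exact hk j
  · obtain ⟨n, hn⟩ := isNilpotent_mulVecLin hX
    have h1 := h (n + ∑ j, k j)
    rw [pow_add, hn, zero_mul, LinearMap.ker_zero, finrank_top, Module.finrank_fin_fun] at h1
    rw [h1]
    refine Finset.sum_congr rfl fun j hj => (min_eq_left ?_).symm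
    have := Finset.single_le_sum (f := k) (fun i _ => Nat.zero_le _) hj
    omega
  · rw [h i, Multiset.map_map]; rfl

lemma rank_conj_pow {ι : Type*} [Fintype ι] [DecidableEq ι] (X : Matrix ι ι ℂ) {g : Matrix ι ι ℂ}
    (hg : IsUnit g.det) (i : ℕ) : ((g * X * g⁻¹) ^ i).rank = (X ^ i).rank := by
  have h : (g * X * g⁻¹) ^ i = g * X ^ i * g⁻¹ := by
    induction i with
    | zero => simp [mul_nonsing_inv _ hg]
    | succ i ih =>
      rw [pow_succ, ih, pow_succ]
      simp only [mul_assoc, nonsing_inv_mul_cancel_left _ _ hg]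
  rw [h, rank_mul_eq_left_of_isUnit_det _ _ (isUnit_nonsing_inv_det g hg),
    rank_mul_eq_right_of_isUnit_det _ _ hg]

lemma rank_fromBlocks_diag {ι κ : Type*} [Fintype ι] [Fintype κ] [DecidableEq ι] [DecidableEq κ]
    (A : Matrix ι ι ℂ) (D : Matrix κ κ ℂ) : (fromBlocks A 0 0 D).rank = A.rank + D.rank := by
  have h : (fromBlocks A 0 0 D).mulVecLin =
      (LinearEquiv.sumArrowLequivProdArrow ι κ ℂ ℂ).symm.toLinearMap ∘ₗ
        (A.mulVecLin.prodMap D.mulVecLin) ∘ₗ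
        (LinearEquiv.sumArrowLequivProdArrow ι κ ℂ ℂ).toLinearMap := by
    refine LinearMap.ext fun v => funext fun i => ?_
    rcases i with i | i
    · simp [fromBlocks_mulVec]; rfl
    · simp [fromBlocks_mulVec]; rfl
  rw [Matrix.rank, h, LinearMap.range_comp, LinearEquiv.finrank_map_eq,
    LinearMap.range_comp_of_range_eq_top _ (LinearEquiv.range _), LinearMap.range_prodMap,
    LinearEquiv.finrank_eq (N := LinearMap.range A.mulVecLin × LinearMap.range D.mulVecLin)
      { toFun := fun x => (⟨x.1.1, x.2.1⟩, ⟨x.1.2, x.2.2⟩)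
        invFun := fun x => ⟨(x.1.1, x.2.1), x.1.2, x.2.2⟩
        map_add' := fun _ _ => rfl
        map_smul' := fun _ _ => rfl
        left_inv := fun _ => rfl
        right_inv := fun _ => rfl }, Module.finrank_prod]
  rfl

/-! ### Realizing admissible partitions -/

lemma minSum_add (s t : Multiset ℕ) (i : ℕ) : minSum (s + t) i = minSum s i + minSum t i := by
  simp [minSum]

lemma minSum_of_sum_le (s : Multiset ℕ) (i : ℕ) (h : s.sum ≤ i) : minSum s i = s.sum := by
  induction s using Multiset.induction_on with
  | empty => simp [minSum]
  | cons a s ih =>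
    rw [Multiset.sum_cons] at h
    rw [minSum_cons, Multiset.sum_cons, ih (by omega), min_eq_left (by omega)]

/-- The multiset `s` is the Jordan type of a matrix `J` that is skew for a nondegenerate symmetric
bilinear form, with Gram matrix `S`. The Jordan type is encoded by the ranks of the powers of `J`,
and the index type is arbitrary so that direct sums are block matrices. -/
def Realizable (s : Multiset ℕ) : Prop :=
  ∃ (ι : Type) (_ : Fintype ι) (_ : DecidableEq ι) (J S : Matrix ι ι ℂ),
    Sᵀ = S ∧ IsUnit S ∧ Jᵀ * S = -(S * J) ∧ Fintype.card ι = s.sum ∧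
      ∀ i, (J ^ i).rank + minSum s i = Fintype.card ι

lemma fromBlocks_diag_pow {ι κ : Type*} [Fintype ι] [Fintype κ] [DecidableEq ι] [DecidableEq κ]
    (A : Matrix ι ι ℂ) (D : Matrix κ κ ℂ) (i : ℕ) :
    fromBlocks A 0 0 D ^ i = fromBlocks (A ^ i) 0 0 (D ^ i) := by
  induction i with
  | zero => simp
  | succ i ih => rw [pow_succ, ih, fromBlocks_multiply]; simp [pow_succ]

lemma Realizable.zero : Realizable 0 := by
  refine ⟨Empty, inferInstance, inferInstance, 0, 0, by simp, ?_, by simp, by simp, fun i => ?_⟩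
  · exact isUnit_of_subsingleton _
  · have := rank_le_card_width ((0 : Matrix Empty Empty ℂ) ^ i)
    simp only [Fintype.card_empty] at this ⊢
    simp [minSum]
    omega

lemma Realizable.add {s t : Multiset ℕ} (hs : Realizable s) (ht : Realizable t) :
    Realizable (s + t) := by
  obtain ⟨ι, _, _, J, S, h1, h2, h3, h4, h5⟩ := hs
  obtain ⟨κ, _, _, K, T, g1, g2, g3, g4, g5⟩ := ht
  refine ⟨ι ⊕ κ, inferInstance, inferInstance, fromBlocks J 0 0 K, fromBlocks S 0 0 T,
    ?_, ?_, ?_, ?_, fun i => ?_⟩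
  · simp [fromBlocks_transpose, h1, g1]
  · rw [isUnit_iff_isUnit_det] at h2 g2 ⊢
    rw [det_fromBlocks_zero₂₁]
    exact h2.mul g2
  · simp [fromBlocks_transpose, fromBlocks_multiply, fromBlocks_neg, h3, g3]
  · rw [Fintype.card_sum, h4, g4, Multiset.sum_add]
  · rw [fromBlocks_diag_pow, rank_fromBlocks_diag, minSum_add, Fintype.card_sum, ← h5 i, ← g5 i]
    omega

/-- The nilpotent Jordan block of size `p`, with ones below the diagonal. -/
def shiftMatrix (p : ℕ) : Matrix (Fin p) (Fin p) ℂ :=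
  Matrix.of fun a b => if (a : ℕ) = b + 1 then 1 else 0

lemma shiftMatrix_pow_apply (p i : ℕ) (a b : Fin p) :
    (shiftMatrix p ^ i) a b = if (a : ℕ) = b + i then 1 else 0 := by
  induction i generalizing a b with
  | zero => simp [Matrix.one_apply, Fin.ext_iff]
  | succ i ih =>
    rw [pow_succ, mul_apply]
    simp only [ih]
    simp only [shiftMatrix, of_apply]
    by_cases hb : (b : ℕ) + 1 < p
    · rw [Finset.sum_eq_single ⟨b + 1, hb⟩]
      · simp [add_assoc, add_comm 1 i]
      · intro c _ hc
        rw [if_neg fun h : (c : ℕ) = b + 1 => hc (Fin.ext h), mul_zero]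
      · simp
    -- the last basis vector is killed, and `a = b + (i + 1)` is out of range
    · rw [Finset.sum_eq_zero, if_neg (by omega)]
      intro c _
      rw [if_neg (c := (c : ℕ) = _) (by omega), mul_zero]

lemma rank_shiftMatrix_pow (p i : ℕ) : (shiftMatrix p ^ i).rank + min p i = p := by
  have h := finrank_ker_pow_of_cyclic (shiftMatrix p).mulVecLin p (by simp) ?_ ?_ i
  · have := finrank_ker_add_rank_pow (shiftMatrix p) i
    rw [Fintype.card_fin] at this
    omega
  · rw [← toLin'_apply', ← toLin'_pow]
    have : shiftMatrix p ^ p = 0 := by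
      ext a b
      rw [shiftMatrix_pow_apply, if_neg (by omega)]; rfl
    rw [this, map_zero]
  · rcases p with _ | q
    · refine (Submodule.finrank_le (LinearMap.ker (shiftMatrix 0).mulVecLin)).trans ?_
      simp
    · suffices h : LinearMap.ker (shiftMatrix (q + 1)).mulVecLin ≤
          Submodule.span ℂ {(Pi.single (Fin.last q) 1 : Fin (q + 1) → ℂ)} from
        (Submodule.finrank_mono h).trans (finrank_span_singleton (by simp)).le
      intro v hv
      rw [Submodule.mem_span_singleton]
      refine ⟨v (Fin.last q), funext fun b => ?_⟩
      induction b using Fin.lastCases with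
      | last => simp
      | cast b =>
        have h := congrFun (LinearMap.mem_ker.1 hv) b.succ
        rw [mulVecLin_apply, mulVec, dotProduct, Finset.sum_eq_single b.castSucc] at h
        · simp [shiftMatrix] at h
          simp [h, (Fin.castSucc_lt_last b).ne]
        · intro c _ hc
          rw [shiftMatrix, of_apply, if_neg, zero_mul]
          intro h
          apply hc
          ext
          simp at h ⊢
          omega
        · simp

/-- The form is `S(eₐ, e_b) = (-1) ^ a` if `a + b + 1 = p` and `0` otherwise, which is symmetric
because `a + b = p - 1` is even. -/
lemma Realizable.singleton {p : ℕ} (hp : Odd p) : Realizable {p} := by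
  have hrev : ∀ a b : Fin p, b = a.rev ↔ (a : ℕ) + b + 1 = p := fun a b => by
    rw [Fin.ext_iff, Fin.val_rev]; omega
  set S : Matrix (Fin p) (Fin p) ℂ :=
    Matrix.of fun a b => if b = a.rev then (-1) ^ (a : ℕ) else 0 with hS
  have hST : Sᵀ = S := by
    ext a b
    simp only [hS, transpose_apply, of_apply, hrev]
    by_cases h : (a : ℕ) + b + 1 = p
    · rw [if_pos h, if_pos (by omega)]
      rcases Nat.even_or_odd (a : ℕ) with ha | ha
      · have hb : Even (b : ℕ) := by grind
        rw [ha.neg_one_pow, hb.neg_one_pow]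
      · have hb : Odd (b : ℕ) := by grind
        rw [ha.neg_one_pow, hb.neg_one_pow]
    · rw [if_neg h, if_neg (by omega)]
  refine ⟨Fin p, inferInstance, inferInstance, shiftMatrix p, S, hST, ?_, ?_, by simp, ?_⟩
  · refine IsUnit.of_mul_eq_one Sᵀ ?_
    ext a b
    rw [mul_apply, Finset.sum_eq_single a.rev]
    · simp only [hS, transpose_apply, of_apply, Fin.rev_inj, if_true, one_apply]
      split_ifs with h
      · rw [← h, ← mul_pow]; simp
      · simp
    · intro c _ hc
      simp [hS, hc]
    · simp
  · ext a b
    rw [neg_apply, mul_apply, mul_apply, Finset.sum_eq_single b.rev,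
      Finset.sum_eq_single a.rev]
    · simp only [hS, transpose_apply, of_apply, shiftMatrix, Fin.rev_rev, Fin.val_rev, if_true]
      by_cases h : p - (b + 1) = (a : ℕ) + 1
      · rw [if_pos h, if_pos (by omega), h]; ring
      · rw [if_neg h, if_neg (by omega)]; ring
    · intro c _ hc
      simp [hS, hc]
    · simp
    · intro c _ hc
      have : b ≠ c.rev := fun h => hc (by rw [h, Fin.rev_rev])
      simp [hS, this]
    · simp
  · intro i
    simpa [minSum] using rank_shiftMatrix_pow p i

/-- On `V × V*` with its hyperbolic form, `(A, -Aᵀ)` is skew and has every block of `A` twice. -/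
lemma Realizable.pair (p : ℕ) : Realizable {p, p} := by
  refine ⟨Fin p ⊕ Fin p, inferInstance, inferInstance,
    fromBlocks (shiftMatrix p) 0 0 (-(shiftMatrix p)ᵀ), fromBlocks 0 1 1 0, ?_, ?_, ?_, ?_,
    fun i => ?_⟩
  · simp [fromBlocks_transpose]
  · refine IsUnit.of_mul_eq_one (fromBlocks 0 1 1 0) ?_
    simp [fromBlocks_multiply]
  · simp [fromBlocks_transpose, fromBlocks_multiply, fromBlocks_neg]
  · simp
  · have h : ((-(shiftMatrix p)ᵀ) ^ i).rank = (shiftMatrix p ^ i).rank := by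
      rw [neg_pow, rank_mul_eq_right_of_isUnit_det, ← transpose_pow, rank_transpose]
      rw [← isUnit_iff_isUnit_det]
      exact isUnit_one.neg.pow i
    have h2 := rank_shiftMatrix_pow p i
    rw [fromBlocks_diag_pow, rank_fromBlocks_diag, h]
    simp [minSum]
    omega

lemma realizable_of_even_count (s : Multiset ℕ) (hs : ∀ p, Even p → Even (s.count p)) :
    Realizable s := by
  induction s using Multiset.strongInductionOn with
  | ih s ih =>
    rcases s.empty_or_exists_mem with rfl | ⟨a, ha⟩
    · exact Realizable.zero
    · obtain ⟨t, rfl⟩ := Multiset.exists_cons_of_mem ha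
      rcases Nat.even_or_odd a with hev | hodd
      · have h := hs a hev
        rw [Multiset.count_cons_self] at h
        have hat : a ∈ t := by
          rw [← Multiset.count_pos]
          by_contra h0
          rw [Nat.eq_zero_of_not_pos h0] at h
          simp at h
        obtain ⟨t, rfl⟩ := Multiset.exists_cons_of_mem hat
        have ht : Realizable t := by
          refine ih t ?_ fun p hp => ?_
          · exact (Multiset.lt_cons_self _ _).trans (Multiset.lt_cons_self _ _)
          · have := hs p hp
            rw [Multiset.count_cons, Multiset.count_cons] at this
            grind
        simpa using (Realizable.pair a).add ht
      · refine (Realizable.singleton hodd).add (ih t (Multiset.lt_cons_self _ _) fun p hp => ?_)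
        have := hs p hp
        rwa [Multiset.count_cons_of_ne] at this
        rintro rfl
        exact (Nat.not_even_iff_odd.2 hodd) hp

lemma exists_skew_of_realizable {N : ℕ} {s : Multiset ℕ} (hs : Realizable s) (hN : s.sum = N) :
    ∃ X : Matrix (Fin N) (Fin N) ℂ, Xᵀ = -X ∧ IsNilpotent X ∧
      ∀ i, (X ^ i).rank + minSum s i = N := by
  obtain ⟨ι, _, _, J, S, hST, hSu, hJ, hcard, hrank⟩ := hs
  obtain ⟨g, hg, hskew⟩ := exists_skew_conj hST hSu hJ
  let e : ι ≃ Fin N := Fintype.equivFinOfCardEq (hcard.trans hN)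
  have hr : ∀ i, (((g * J * g⁻¹).submatrix e.symm e.symm) ^ i).rank + minSum s i = N := fun i => by
    have : ((g * J * g⁻¹).submatrix e.symm e.symm) ^ i =
        ((g * J * g⁻¹) ^ i).submatrix e.symm e.symm :=
      (map_pow (reindexAlgEquiv ℂ ℂ e) (g * J * g⁻¹) i).symm
    rw [this, rank_submatrix, rank_conj_pow J hg, hrank, hcard, hN]
  refine ⟨_, ?_, ⟨N, ?_⟩, hr⟩
  · rw [transpose_submatrix, hskew]; rfl
  · have := hr N
    rw [minSum_of_sum_le s N hN.le, hN] at this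
    have h0 : Module.finrank ℂ (LinearMap.range (mulVecLin
        ((g * J * g⁻¹).submatrix e.symm e.symm ^ N))) = 0 := by
      rw [← Matrix.rank]
      omega
    rw [Submodule.finrank_eq_zero, LinearMap.range_eq_bot] at h0
    exact toLin'.injective (by rw [toLin'_apply', h0, map_zero])

/-- Two nilpotent elements of `so(2n+1, ℂ)` are conjugate under `SO(2n+1, ℂ)` if and only
if they have the same Jordan type; moreover, a partition of `2n+1` is the Jordan type of a
nilpotent element of `so(2n+1, ℂ)` if and only if it is `1`-admissible.  (Together, these
say that the Jordan type induces a bijection between the set of nilpotent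
`SO(2n+1, ℂ)`-orbits in `so(2n+1, ℂ)` and the set of `1`-admissible partitions of `2n+1`.) -/
theorem soOddNilpotentOrbitClassification (n : ℕ) (hn : 1 ≤ n) :
    (∀ X ∈ soSet (2 * n + 1), ∀ Y ∈ soSet (2 * n + 1), IsNilpotent X → IsNilpotent Y →
      ((∃ g ∈ SOSet (2 * n + 1), g * X * g⁻¹ = Y) ↔
        ∃ d : Nat.Partition (2 * n + 1), MatJordanType X d ∧ MatJordanType Y d))
    ∧ (∀ d : Nat.Partition (2 * n + 1),
        (∃ X ∈ soSet (2 * n + 1), IsNilpotent X ∧ MatJordanType X d) ↔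
          EpsAdmissible 1 d) := by
  refine ⟨fun X hX Y hY hXn hYn => ⟨?_, ?_⟩, fun d => ⟨?_, fun hd => ?_⟩⟩
  · rintro ⟨g, ⟨-, hdet⟩, rfl⟩
    obtain ⟨d, hd⟩ := exists_matJordanType hXn
    refine ⟨d, hd, ?_⟩
    rw [matJordanType_iff] at hd ⊢
    intro i
    rw [rank_conj_pow X (by rw [hdet]; exact isUnit_one), hd]
  · rintro ⟨d, hdX, hdY⟩
    obtain ⟨g, hg, hgX⟩ := exists_conj_of_finrank_ker_eq hXn hYn fun i => (hdX i).trans (hdY i).symm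
    obtain ⟨k, hk, hkX⟩ := exists_orthogonal_of_conj hX hY hg hgX
    have hdet : k.det = 1 ∨ k.det = -1 := by
      have := congrArg det hk
      rw [det_mul, det_transpose, det_one] at this
      exact mul_self_eq_one_iff.1 this
    obtain ⟨k', hk', hdet', hkX'⟩ : ∃ k' : Matrix (Fin (2 * n + 1)) (Fin (2 * n + 1)) ℂ,
        k'ᵀ * k' = 1 ∧ k'.det = 1 ∧ k' * X = Y * k' := by
      rcases hdet with h | h
      · exact ⟨k, hk, h, hkX⟩
      -- `-1` is central and has determinant `-1` in odd dimension
      · refine ⟨-k, by simpa using hk, ?_, by simpa using hkX⟩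
        rw [det_neg, h, Fintype.card_fin, Odd.neg_one_pow ⟨n, rfl⟩]
        norm_num
    refine ⟨k', ⟨hk', hdet'⟩, ?_⟩
    rw [hkX', mul_nonsing_inv_cancel_right]
    rw [hdet']; exact isUnit_one
  · rintro ⟨X, hX, -, hd⟩ p (⟨-, hp⟩ | ⟨h, -⟩)
    · rcases Nat.eq_zero_or_pos p with rfl | hpos
      · rw [Multiset.count_eq_zero_of_notMem fun h => (d.parts_pos h).ne' rfl]
        exact Even.zero
      · rw [matJordanType_iff] at hd
        -- odd powers of a skew matrix are skew
        have hodd : ∀ i, Odd i → Even (X ^ i).rank := fun i hi => even_rank_of_skew (by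
          rw [transpose_pow, show Xᵀ = -X from hX, hi.neg_pow])
        have h1 := hodd (p + 1) hp.add_one
        have h2 := hodd (p - 1) (by grind)
        have e1 := hd (p + 1)
        have e2 := hd (p - 1)
        have e3 := minSum_second_difference d.parts p hpos
        grind
    · norm_num at h
  · obtain ⟨X, hX, hXn, hr⟩ := exists_skew_of_realizable
      (realizable_of_even_count d.parts fun p hp => hd p (Or.inl ⟨rfl, hp⟩)) d.parts_sum
    exact ⟨X, hX, hXn, (matJordanType_iff X d).2 hr⟩
end

section
/- Let n ≥ 1. Two nilpotent elements of sp(2n,ℂ) are conjugate under Sp(2n,ℂ) if and only if they have the same Jordan type; moreover, a partition of 2n is the Jordan type of a nilpotent element of sp(2n,ℂ) if and only if it is (-1)-admissible. Consequently, the Jordan type induces a bijection between the set of nilpotent Sp(2n,ℂ)-orbits in sp(2n,ℂ) and the set of (-1)-admissible partitions of 2n. -/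
/-!
The proof rests on two facts of linear algebra over `ℂ`.

*Jordan form.* A nilpotent endomorphism `f` of `V` makes `V` a torsion `ℂ[X]`-module, hence a
direct sum of cyclic modules `ℂ[X] / (X ^ k i)`, on each of which `dim ker (X ^ j) = min (k i) j`.
So `f` has a Jordan type (`exists_partition_of_isNilpotent`). Conversely, the number of blocks of
a given positive size is minus the second difference of `j ↦ dim ker (f ^ j)`
(`two_mul_sum_min`), so these dimensions determine `f` up to linear isomorphism
(`exists_equiv_of_finrank_ker_pow_eq`).

*Square roots.* Let `A`, `B` be invertible skew-symmetric matrices. Then `h = A⁻¹ B` is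
self-adjoint for the form `A`, and it has a square root `s` that is a polynomial in `h`, hence
also self-adjoint; therefore `sᵀ A s = A s² = B`. If `X` is infinitesimally skew for both forms,
it commutes with `h`, hence with `s` (`exists_congr_of_skew`).

Conjugacy: if `X, Y ∈ sp(2n, ℂ)` have the same Jordan type, then `h X = Y h` for some invertible
`h`. Both `J` and `hᵀ J h` are forms for which `X` is infinitesimally skew, so the square root
lemma gives `s` commuting with `X` such that `sᵀ J s = hᵀ J h`; now `g = h s⁻¹` is symplectic and
conjugates `X` to `Y` (`exists_symplectic_conj`).

Admissibility is necessary: if `X ∈ sp(2n, ℂ)` and `q` is even, then `J X ^ q` is skew-symmetric,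
so it has even rank and `dim ker (X ^ q)` is even (`even_finrank_ker_of_mem_spSet`). The
multiplicity of an odd part `2 q + 1` is
`2 dim ker (X ^ (2 q + 1)) - dim ker (X ^ (2 q)) - dim ker (X ^ (2 q + 2))`, which is even.

Admissibility is sufficient: a single Jordan block of even size is infinitesimally skew for the
anti-diagonal alternating form with alternating signs, and two equal blocks of any size for a
hyperbolic form. Direct sums of these realize every `(-1)`-admissible partition for some
nondegenerate alternating form (`skewRealizable_of_even_count`), which the square root lemma
identifies with `J` (`exists_mem_spSet_of_skewRealizable`).
-/

open Matrix

/-- The standard symplectic matrix `J = [[0, Iₙ], [-Iₙ, 0]]`. -/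
noncomputable def sympJ (n : ℕ) : Matrix (Fin (2 * n)) (Fin (2 * n)) ℂ :=
  Matrix.of fun i j =>
    if (i : ℕ) + n = (j : ℕ) then 1 else if (j : ℕ) + n = (i : ℕ) then -1 else 0

/-- `sp(2n, ℂ) = {X : Xᵀ J + J X = 0}`. -/
def spSet (n : ℕ) : Set (Matrix (Fin (2 * n)) (Fin (2 * n)) ℂ) :=
  {X | Xᵀ * sympJ n + sympJ n * X = 0}

/-- `Sp(2n, ℂ) = {g : gᵀ J g = J}`. -/
def SpSet (n : ℕ) : Set (Matrix (Fin (2 * n)) (Fin (2 * n)) ℂ) :=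
  {g | gᵀ * sympJ n * g = sympJ n}


/-! ### Square roots of matrices and congruence of alternating forms -/

open Polynomial in
/-- `X` is a square modulo any product of linear factors with nonzero roots. To handle one more
root `a`, a square root `q` modulo `f` is replaced by `q + C r * f` for a suitable constant `r`. -/
theorem exists_dvd_sq_sub_X (s : Multiset ℂ) (hs : (0 : ℂ) ∉ s) :
    ∃ q : ℂ[X], (s.map (fun a => X - C a)).prod ∣ q ^ 2 - X := by
  induction s using Multiset.induction_on with
  | empty => exact ⟨0, by simp⟩
  | cons a s ih =>
    obtain ⟨q, t, ht⟩ := ih (fun h => hs (Multiset.mem_cons_of_mem h))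
    have ha : a ≠ 0 := fun h => hs (by simp [h])
    set f := (s.map (fun a => X - C a)).prod with hf
    have hea : (q.eval a) ^ 2 - a = f.eval a * t.eval a := by
      have := congrArg (Polynomial.eval a) ht
      simpa using this
    have hr : ∃ r : ℂ, t.eval a + 2 * q.eval a * r + r ^ 2 * f.eval a = 0 := by
      by_cases h0 : f.eval a = 0
      -- `a` is already a root of `f`: the equation for `r` is linear, with slope `2 q(a) ≠ 0`.
      · have hq : q.eval a ≠ 0 := by
          intro hq
          rw [h0, hq] at hea
          apply ha
          linear_combination -hea
        refine ⟨-t.eval a / (2 * q.eval a), ?_⟩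
        rw [h0]
        field_simp
        ring
      -- Otherwise it is quadratic, with reduced discriminant `q(a)² - f(a) t(a)`.
      · obtain ⟨z, hz⟩ := IsAlgClosed.exists_pow_nat_eq
          (q.eval a ^ 2 - f.eval a * t.eval a) (n := 2) two_pos
        refine ⟨(z - q.eval a) / f.eval a, ?_⟩
        field_simp
        linear_combination hz
    obtain ⟨r, hr⟩ := hr
    obtain ⟨u, hu⟩ : X - C a ∣ t + 2 * q * C r + C r ^ 2 * f := by
      rw [dvd_iff_isRoot]
      simpa using hr
    refine ⟨q + C r * f, u, ?_⟩
    rw [Multiset.map_cons, Multiset.prod_cons, ← hf]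
    linear_combination ht + f * hu

open Polynomial in
/-- An invertible complex matrix has a square root that is a polynomial in it, by Cayley–Hamilton
and a square root of `X` modulo the characteristic polynomial. -/
theorem exists_aeval_sq {ι : Type*} [Fintype ι] [DecidableEq ι] (h : Matrix ι ι ℂ)
    (hh : IsUnit h.det) : ∃ q : ℂ[X], (aeval h q) ^ 2 = h := by
  have h0 : (0 : ℂ) ∉ h.charpoly.roots := by
    intro h0
    have := Polynomial.isRoot_of_mem_roots h0
    rw [IsRoot, ← coeff_zero_eq_eval_zero] at this
    rw [Matrix.det_eq_sign_charpoly_coeff, this] at hh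
    simp at hh
  obtain ⟨q, t, ht⟩ := exists_dvd_sq_sub_X _ h0
  have hp := (IsAlgClosed.splits h.charpoly).eq_prod_roots_of_monic h.charpoly_monic
  rw [← hp] at ht
  refine ⟨q, ?_⟩
  have := congrArg (aeval h) ht
  simp [Matrix.aeval_self_charpoly] at this
  exact sub_eq_zero.mp this

open Polynomial in
/-- Two nondegenerate alternating forms `A`, `B` are congruent, through an `s` that commutes with
every `X` infinitesimally skew for both: `s` is a polynomial square root of `A⁻¹ * B`. -/
theorem exists_congr_of_skew {ι : Type*} [Fintype ι] [DecidableEq ι] (A B : Matrix ι ι ℂ)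
    (hA : Aᵀ = -A) (hB : Bᵀ = -B) (hAd : IsUnit A.det) (hBd : IsUnit B.det) :
    ∃ s : Matrix ι ι ℂ, sᵀ * A * s = B ∧
      ∀ X : Matrix ι ι ℂ, Xᵀ * A + A * X = 0 → Xᵀ * B + B * X = 0 → Commute X s := by
  have hAh : A * (A⁻¹ * B) = B := Matrix.mul_nonsing_inv_cancel_left _ _ hAd
  obtain ⟨q, hq⟩ := exists_aeval_sq (A⁻¹ * B) (by
    rw [Matrix.det_mul]; exact (Matrix.isUnit_nonsing_inv_det A hAd).mul hBd)
  -- `h = A⁻¹ * B` is self-adjoint for the form `A`, and so is every polynomial in `h`.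
  have hhT : (A⁻¹ * B)ᵀ * A = A * (A⁻¹ * B) := by
    rw [hAh, Matrix.transpose_mul, Matrix.transpose_nonsing_inv, hA, hB]
    have : (-A)⁻¹ = -A⁻¹ := by
      apply Matrix.inv_eq_left_inv
      rw [neg_mul_neg, Matrix.nonsing_inv_mul _ hAd]
    rw [this, neg_mul_neg, mul_assoc, Matrix.nonsing_inv_mul _ hAd, mul_one]
  generalize hh : A⁻¹ * B = h at *
  have key : ∀ p : ℂ[X], (aeval h p)ᵀ * A = A * aeval h p := by
    intro p
    induction p using Polynomial.induction_on' with
    | add p q hp hq => simp [hp, hq, add_mul, mul_add]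
    | monomial n a =>
      have : ∀ n : ℕ, (h ^ n)ᵀ * A = A * h ^ n := by
        intro n
        induction n with
        | zero => simp
        | succ n ih =>
          rw [pow_succ, Matrix.transpose_mul, mul_assoc, ih, ← mul_assoc, hhT, mul_assoc,
            ← pow_succ', pow_succ]
      simpa [aeval_monomial, ← Algebra.smul_def] using congrArg (a • ·) (this n)
  refine ⟨aeval h q, ?_, ?_⟩
  · rw [key, mul_assoc, ← pow_two, hq, hAh]
  · intro X hXA hXB
    clear hq
    have hc : Commute X h := by
      have h1 : A * (X * h) = A * (h * X) := by
        have e1 : A * X = -(Xᵀ * A) := eq_neg_of_add_eq_zero_right hXA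
        have e2 : B * X = -(Xᵀ * B) := eq_neg_of_add_eq_zero_right hXB
        rw [← mul_assoc, e1, ← mul_assoc, hAh, e2, neg_mul, mul_assoc, hAh]
      have := congrArg (A⁻¹ * ·) h1
      simpa only [Matrix.nonsing_inv_mul_cancel_left _ _ hAd] using! this
    induction q using Polynomial.induction_on' with
    | add p q hp hq => rw [map_add]; exact hp.add_right hq
    | monomial n a =>
      rw [aeval_monomial, ← Algebra.smul_def]
      exact (hc.pow_right n).smul_right a

/-! ### The rank of a skew-symmetric matrix -/

theorem even_of_skew_isUnit_det {r : ℕ} (B : Matrix (Fin r) (Fin r) ℂ) (hB : Bᵀ = -B)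
    (hd : B.det ≠ 0) : Even r := by
  by_contra h
  rw [Nat.not_even_iff_odd] at h
  have h1 := congrArg Matrix.det hB
  rw [Matrix.det_transpose, Matrix.det_neg, Fintype.card_fin, h.neg_one_pow] at h1
  apply hd
  linear_combination h1 / 2

/-- The form `A` is nondegenerate on a complement `W` of its kernel, and the dimension of `W` is
the rank of `A`. -/
theorem even_rank_of_skew_s1 {N : ℕ} (A : Matrix (Fin N) (Fin N) ℂ) (hA : Aᵀ = -A) :
    Even A.rank := by
  obtain ⟨W, hW⟩ := Submodule.exists_isCompl (LinearMap.ker A.mulVecLin)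
  have hr : Module.finrank ℂ W = A.rank := by
    have h1 := Submodule.finrank_add_eq_of_isCompl hW
    have h2 := LinearMap.finrank_range_add_finrank_ker A.mulVecLin
    rw [Matrix.rank]
    omega
  let b := Module.finBasis ℂ W
  let P : Matrix (Fin N) (Fin (Module.finrank ℂ W)) ℂ := Matrix.of fun i j => (b j : Fin N → ℂ) i
  have hP : ∀ x, P *ᵥ x = (b.equivFun.symm x : W) := by
    intro x
    ext i
    simp [P, Matrix.mulVec, dotProduct, Module.Basis.equivFun_symm_apply, mul_comm]
  rw [← hr]
  refine even_of_skew_isUnit_det (Pᵀ * A * P) ?_ ?_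
  · simp [Matrix.transpose_mul, hA, Matrix.mul_assoc]
  · intro hdet
    obtain ⟨x, hx0, hx⟩ := Matrix.exists_mulVec_eq_zero_iff.mpr hdet
    set w : W := b.equivFun.symm x with hw
    have hw0 : w ≠ 0 := (LinearEquiv.map_ne_zero_iff _).mpr hx0
    have hWz : ∀ u : W, (u : Fin N → ℂ) ⬝ᵥ (A *ᵥ (w : Fin N → ℂ)) = 0 := by
      intro u
      have := congrArg (fun z => (b.equivFun u) ⬝ᵥ z) hx
      simp only [dotProduct_zero] at this
      rw [← this, ← Matrix.mulVec_mulVec, ← Matrix.mulVec_mulVec, hP,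
        Matrix.dotProduct_mulVec _ Pᵀ, Matrix.vecMul_transpose, hP, LinearEquiv.symm_apply_apply]
    have hKz : ∀ u ∈ LinearMap.ker A.mulVecLin, u ⬝ᵥ (A *ᵥ (w : Fin N → ℂ)) = 0 := by
      intro u hu
      have hu' : A *ᵥ u = 0 := by simpa using hu
      rw [Matrix.dotProduct_mulVec, ← Matrix.mulVec_transpose, hA, Matrix.neg_mulVec, hu']
      simp
    have hz : A *ᵥ (w : Fin N → ℂ) = 0 := by
      apply dotProduct_eq_zero
      intro v
      obtain ⟨k, hk, u, hu, rfl⟩ := Submodule.mem_sup.mp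
        (hW.sup_eq_top ▸ Submodule.mem_top : v ∈ LinearMap.ker A.mulVecLin ⊔ W)
      rw [dotProduct_comm, add_dotProduct, hKz k hk, hWz ⟨u, hu⟩, add_zero]
    have : (w : Fin N → ℂ) ∈ LinearMap.ker A.mulVecLin ⊓ W := ⟨by simpa using hz, w.2⟩
    rw [hW.inf_eq_bot] at this
    exact hw0 (by simpa using this)

/-! ### Kernel dimensions of powers -/

theorem finrank_ker_pow_add_le {V : Type*} [AddCommGroup V] [Module ℂ V] [FiniteDimensional ℂ V]
    (f : Module.End ℂ V) (i j : ℕ) :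
    Module.finrank ℂ (LinearMap.ker (f ^ (i + j))) ≤
      Module.finrank ℂ (LinearMap.ker (f ^ i)) + Module.finrank ℂ (LinearMap.ker (f ^ j)) := by
  let g : LinearMap.ker (f ^ (i + j)) →ₗ[ℂ] LinearMap.ker (f ^ i) :=
    ((f ^ j).domRestrict _).codRestrict _ (by
      rintro ⟨v, hv⟩
      rw [pow_add] at hv
      simpa using hv)
  rw [← LinearMap.finrank_range_add_finrank_ker g]
  refine Nat.add_le_add (Submodule.finrank_le _) ?_
  let h : LinearMap.ker g →ₗ[ℂ] LinearMap.ker (f ^ j) :=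
    ((LinearMap.ker (f ^ (i + j))).subtype.domRestrict _).codRestrict _ (by
      rintro ⟨⟨v, hv⟩, hw⟩
      have := congrArg Subtype.val (LinearMap.mem_ker.mp hw)
      simpa [g] using this)
  refine LinearMap.finrank_le_finrank_of_injective (f := h) ?_
  intro x y hxy
  have := congrArg Subtype.val hxy
  exact Subtype.ext (Subtype.ext this)

/-- A nilpotent endomorphism whose kernel is at most a line is a single Jordan block: by
subadditivity `dim ker (f ^ j) ≤ j`, and `dim ker (f ^ j) + dim ker (f ^ (dim V - j)) ≥ dim V`
forces equality. -/
theorem finrank_ker_pow_single {V : Type*} [AddCommGroup V] [Module ℂ V] [FiniteDimensional ℂ V]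
    (f : Module.End ℂ V) (hf : f ^ Module.finrank ℂ V = 0)
    (h1 : Module.finrank ℂ (LinearMap.ker f) ≤ 1) (j : ℕ) :
    Module.finrank ℂ (LinearMap.ker (f ^ j)) = min (Module.finrank ℂ V) j := by
  have hle : ∀ j, Module.finrank ℂ (LinearMap.ker (f ^ j)) ≤ j := by
    intro j
    induction j with
    | zero => simp [Module.End.one_eq_id]
    | succ j ih =>
      refine (finrank_ker_pow_add_le f j 1).trans ?_
      rw [pow_one]
      omega
  have htop : ∀ j, Module.finrank ℂ V ≤ j → Module.finrank ℂ (LinearMap.ker (f ^ j)) =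
      Module.finrank ℂ V := by
    intro j hj
    have : f ^ j = 0 := pow_eq_zero_of_le hj hf
    rw [this, LinearMap.ker_zero, finrank_top]
  rcases le_total (Module.finrank ℂ V) j with h | h
  · rw [htop j h, min_eq_left h]
  · rw [min_eq_right h]
    refine le_antisymm (hle j) ?_
    have h2 := finrank_ker_pow_add_le f j (Module.finrank ℂ V - j)
    have h3 := hle (Module.finrank ℂ V - j)
    rw [Nat.add_sub_cancel' h, htop _ le_rfl] at h2
    omega

theorem finrank_ker_pow_of_equiv {V W : Type*} [AddCommGroup V] [Module ℂ V]
    [AddCommGroup W] [Module ℂ W] (f : Module.End ℂ V) (g : Module.End ℂ W) (e : V ≃ₗ[ℂ] W)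
    (h : ∀ v, e (f v) = g (e v)) (j : ℕ) :
    Module.finrank ℂ (LinearMap.ker (f ^ j)) = Module.finrank ℂ (LinearMap.ker (g ^ j)) := by
  have hj : ∀ v, e ((f ^ j) v) = (g ^ j) (e v) := by
    induction j with
    | zero => simp
    | succ j ih => intro v; rw [pow_succ', pow_succ', Module.End.mul_apply, h, ih]; rfl
  have : LinearMap.ker (g ^ j) = (LinearMap.ker (f ^ j)).map (e : V →ₗ[ℂ] W) := by
    ext w
    constructor
    · intro hw
      refine ⟨e.symm w, ?_, by simp⟩
      have := hj (e.symm w)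
      rw [e.apply_symm_apply, LinearMap.mem_ker.mp hw] at this
      simpa using this
    · rintro ⟨v, hv, rfl⟩
      have := hj v
      rw [LinearMap.mem_ker.mp hv, map_zero] at this
      exact this.symm
  rw [this, LinearEquiv.finrank_map_eq]

theorem finrank_ker_pow_pi {ι : Type*} [Fintype ι] {V : ι → Type*} [∀ i, AddCommGroup (V i)]
    [∀ i, Module ℂ (V i)] [∀ i, FiniteDimensional ℂ (V i)] (f : ∀ i, Module.End ℂ (V i))
    (F : Module.End ℂ (∀ i, V i)) (hF : ∀ v i, F v i = f i (v i)) (j : ℕ) :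
    Module.finrank ℂ (LinearMap.ker (F ^ j)) =
      ∑ i, Module.finrank ℂ (LinearMap.ker (f i ^ j)) := by
  have hj : ∀ v i, (F ^ j) v i = (f i ^ j) (v i) := by
    induction j with
    | zero => simp
    | succ j ih => intro v i; rw [pow_succ', pow_succ', Module.End.mul_apply, hF, ih]; rfl
  rw [← Module.finrank_pi_fintype]
  refine LinearEquiv.finrank_eq (LinearEquiv.ofBijective
    (LinearMap.pi fun i => (((LinearMap.proj i).domRestrict _).codRestrict (LinearMap.ker (f i ^ j))
      ?_ : LinearMap.ker (F ^ j) →ₗ[ℂ] LinearMap.ker (f i ^ j))) ⟨?_, ?_⟩)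
  · rintro ⟨v, hv⟩
    have := congrFun (LinearMap.mem_ker.mp hv) i
    rw [hj] at this
    simpa using this
  · intro x y hxy
    ext i
    exact congrArg Subtype.val (congrFun hxy i)
  · intro y
    refine ⟨⟨fun i => y i, ?_⟩, rfl⟩
    rw [LinearMap.mem_ker]
    ext i
    rw [hj]
    exact (y i).2

/-! ### Decomposition into cyclic modules -/

/-- The cyclic `ℂ[X]`-module `ℂ[X] / (X ^ a)`, on which `X` acts as a single nilpotent Jordan
block of size `a`. -/
abbrev CycMod (a : ℕ) : Type :=
  Polynomial ℂ ⧸ (Submodule.span (Polynomial ℂ) {(Polynomial.X : Polynomial ℂ) ^ a})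

/-- Multiplication by `X` on a `ℂ[X]`-module, as a `ℂ`-linear map. -/
noncomputable abbrev mulX (M : Type*) [AddCommGroup M] [Module ℂ M] [Module (Polynomial ℂ) M]
    [IsScalarTower ℂ (Polynomial ℂ) M] : Module.End ℂ M :=
  Algebra.lsmul ℂ ℂ M (Polynomial.X : Polynomial ℂ)

theorem finrank_cycMod (a : ℕ) : Module.finrank ℂ (CycMod a) = a := by
  have := finrank_quotient_span_eq_natDegree (K := ℂ) (f := (Polynomial.X : Polynomial ℂ) ^ a)
  rwa [Polynomial.natDegree_X_pow] at this

instance (a : ℕ) : FiniteDimensional ℂ (CycMod a) := by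
  rcases Nat.eq_zero_or_pos a with rfl | h
  · have : Subsingleton (CycMod 0) := by
      rw [Submodule.Quotient.subsingleton_iff, pow_zero]
      exact Ideal.span_singleton_one
    exact Module.Finite.of_finite
  · exact Module.finite_of_finrank_pos (by rwa [finrank_cycMod])

open Polynomial in
theorem mulX_cycMod_pow (a : ℕ) : mulX (CycMod a) ^ a = 0 := by
  refine LinearMap.ext fun v => ?_
  obtain ⟨p, rfl⟩ := Submodule.Quotient.mk_surjective _ v
  have h : (X ^ a : ℂ[X]) • (Submodule.Quotient.mk p : CycMod a) = 0 := by
    rw [← Submodule.Quotient.mk_smul, Submodule.Quotient.mk_eq_zero, Submodule.mem_span_singleton]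
    exact ⟨p, mul_comm _ _⟩
  rw [mulX, ← map_pow]
  exact h

open Polynomial in
/-- The kernel of `X` on `ℂ[X] / (X ^ a)` is spanned by the class of `X ^ (a - 1)`. For `a = 0`
the exponent truncates to `0`, which is harmless since the module is trivial. -/
theorem mulX_cycMod_ker (a : ℕ) (w : CycMod a) (hw : (X : ℂ[X]) • w = 0) :
    ∃ c : ℂ, w = c • (Submodule.Quotient.mk (X ^ (a - 1) : ℂ[X]) : CycMod a) := by
  obtain ⟨p, rfl⟩ := Submodule.Quotient.mk_surjective _ w
  rw [← Submodule.Quotient.mk_smul, Submodule.Quotient.mk_eq_zero,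
    Submodule.mem_span_singleton] at hw
  obtain ⟨q, hq⟩ := hw
  rcases Nat.eq_zero_or_pos a with rfl | ha
  · refine ⟨0, ?_⟩
    rw [zero_smul, Submodule.Quotient.mk_eq_zero, Submodule.mem_span_singleton]
    exact ⟨p, by simp⟩
  · obtain ⟨b, rfl⟩ : ∃ b, a = b + 1 := ⟨a - 1, by omega⟩
    have hp : p = q * X ^ b := by
      apply mul_left_cancel₀ (X_ne_zero (R := ℂ))
      rw [smul_eq_mul, smul_eq_mul] at hq
      rw [← hq]; ring
    refine ⟨q.coeff 0, ?_⟩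
    rw [← Submodule.Quotient.mk_smul, Submodule.Quotient.eq, Submodule.mem_span_singleton]
    refine ⟨q.divX, ?_⟩
    rw [hp, Nat.add_sub_cancel, smul_eq_C_mul, smul_eq_mul]
    nth_rewrite 2 [← Polynomial.divX_mul_X_add q]
    ring

theorem finrank_le_one_of_forall_smul {V : Type*} [AddCommGroup V] [Module ℂ V]
    (S : Submodule ℂ V) (z : V) (h : ∀ w ∈ S, ∃ c : ℂ, w = c • z) : Module.finrank ℂ S ≤ 1 := by
  have hS : S ≤ ℂ ∙ z := fun w hw => by
    obtain ⟨c, rfl⟩ := h w hw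
    exact Submodule.smul_mem _ _ (Submodule.mem_span_singleton_self z)
  exact (Submodule.finrank_mono hS).trans (by simpa using finrank_span_le_card (R := ℂ) ({z} : Set V))

theorem finrank_ker_mulX_cycMod (a j : ℕ) :
    Module.finrank ℂ (LinearMap.ker (mulX (CycMod a) ^ j)) = min a j := by
  have := finrank_ker_pow_single (mulX (CycMod a)) (by rw [finrank_cycMod, mulX_cycMod_pow])
    (finrank_le_one_of_forall_smul _ _ fun w hw => mulX_cycMod_ker a w hw) j
  rwa [finrank_cycMod] at this

open Polynomial in
/-- The structure theorem for torsion modules over `ℂ[X]`, applied to `V` with `X` acting as `f`.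
Some of the sizes `k i` may be `0`. -/
theorem exists_cyc_decomposition {V : Type} [AddCommGroup V] [Module ℂ V] [FiniteDimensional ℂ V]
    (f : Module.End ℂ V) (hf : IsNilpotent f) :
    ∃ (d : ℕ) (k : Fin d → ℕ) (e : V ≃ₗ[ℂ] (∀ i, CycMod (k i))),
      ∀ v, e (f v) = mulX (∀ i, CycMod (k i)) (e v) := by
  obtain ⟨m, hm⟩ := hf
  obtain ⟨d, k, ⟨e⟩⟩ := Module.torsion_by_prime_power_decomposition (R := ℂ[X])
    (M := Module.AEval' f) (p := X) Polynomial.irreducible_X (by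
      intro v
      obtain ⟨v, rfl⟩ := (Module.AEval'.of f).surjective v
      refine ⟨⟨X ^ m, m, rfl⟩, ?_⟩
      change (X ^ m : ℂ[X]) • Module.AEval'.of f v = 0
      rw [Module.AEval'.X_pow_smul_of, hm]
      simp)
  let e' := e.trans (DirectSum.linearEquivFunOnFintype ℂ[X] (Fin d) fun i => CycMod (k i))
  refine ⟨d, k, (Module.AEval'.of f).trans (e'.restrictScalars ℂ), fun v => ?_⟩
  simp only [LinearEquiv.trans_apply, LinearEquiv.restrictScalars_apply]
  rw [← Module.AEval'.X_smul_of, map_smul]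
  rfl

theorem finrank_ker_pow_of_decomposition {V : Type} [AddCommGroup V] [Module ℂ V]
    (f : Module.End ℂ V) {d : ℕ} {k : Fin d → ℕ} (e : V ≃ₗ[ℂ] (∀ i, CycMod (k i)))
    (he : ∀ v, e (f v) = mulX (∀ i, CycMod (k i)) (e v)) (j : ℕ) :
    Module.finrank ℂ (LinearMap.ker (f ^ j)) = ∑ i, min (k i) j := by
  rw [finrank_ker_pow_of_equiv f _ e he, finrank_ker_pow_pi (fun i => mulX (CycMod (k i)))]
  · simp_rw [finrank_ker_mulX_cycMod]
  · intro v i; rfl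

/-! ### The Jordan type and conjugacy under `GL` -/

/-- The multiplicity of `p + 1` in `S` is minus the second difference of `j ↦ Σ_x min (x, j)`. -/
theorem two_mul_sum_min (S : Multiset ℕ) (p : ℕ) :
    2 * (S.map (fun x => min x (p + 1))).sum =
      (S.map (fun x => min x p)).sum + (S.map (fun x => min x (p + 2))).sum + S.count (p + 1) := by
  induction S using Multiset.induction_on with
  | empty => simp
  | cons a S ih =>
    simp only [Multiset.map_cons, Multiset.sum_cons, Multiset.count_cons]
    split_ifs <;> omega

theorem count_eq_of_sum_min_eq (S T : Multiset ℕ)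
    (h : ∀ j, (S.map (fun x => min x j)).sum = (T.map (fun x => min x j)).sum) (p : ℕ) :
    S.count (p + 1) = T.count (p + 1) := by
  have h1 := two_mul_sum_min S p
  have h2 := two_mul_sum_min T p
  rw [h, h, h] at h1
  omega

/-- The identification of `ℂ[X] / (X ^ a)` with `ℂ[X] / (X ^ b)` for `a = b`. -/
noncomputable def cycCast {a b : ℕ} (h : a = b) : CycMod a ≃ₗ[Polynomial ℂ] CycMod b :=
  h ▸ LinearEquiv.refl _ _

/-- Sorting the factors of a product of cyclic modules by size; the trivial factors
`ℂ[X] / (X ^ 0)` drop out. -/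
noncomputable def sortCyc {d : ℕ} (k : Fin d → ℕ) :
    (∀ i, CycMod (k i)) ≃ₗ[Polynomial ℂ] ∀ p : ℕ, {i // k i = p + 1} → CycMod (p + 1) :=
  LinearEquiv.ofBijective
    (LinearMap.pi fun p => LinearMap.pi fun i : {i // k i = p + 1} =>
      (cycCast i.2).toLinearMap ∘ₗ LinearMap.proj i.1) <| by
    constructor
    · intro x y hxy
      refine funext fun i => ?_
      obtain h | ⟨p, h⟩ : k i = 0 ∨ ∃ p, k i = p + 1 := by
        rcases Nat.eq_zero_or_pos (k i) with h | h
        · exact Or.inl h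
        · exact Or.inr ⟨k i - 1, by omega⟩
      · have : Subsingleton (CycMod (k i)) := by
          rw [Submodule.Quotient.subsingleton_iff, h, pow_zero]
          exact Ideal.span_singleton_one
        exact Subsingleton.elim _ _
      · have := congrFun (congrFun hxy p) ⟨i, h⟩
        exact (cycCast h).injective this
    · intro y
      refine ⟨fun i => if h : k i = 0 then 0 else
        (cycCast (Nat.succ_pred_eq_of_ne_zero h)) (y (k i - 1) ⟨i, by omega⟩), ?_⟩
      refine funext fun p => funext fun ⟨i, hi⟩ => ?_
      have h0 : k i ≠ 0 := by omega
      obtain rfl : p = k i - 1 := by omega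
      simp only [LinearMap.pi_apply, LinearMap.comp_apply, LinearMap.proj_apply, dif_neg h0]
      have : ∀ {a b : ℕ} (h : a = b) (h' : b = a) (x : CycMod a),
          (cycCast h') ((cycCast h) x) = x := by
        intro a b h h' x
        subst h
        rfl
      exact this _ _ _

/-- Two nilpotent endomorphisms whose powers have kernels of equal dimensions are conjugate: both
spaces are isomorphic to a product of the same number of cyclic modules of each size. -/
theorem exists_equiv_of_finrank_ker_pow_eq {V W : Type} [AddCommGroup V] [Module ℂ V]
    [FiniteDimensional ℂ V] [AddCommGroup W] [Module ℂ W] [FiniteDimensional ℂ W]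
    (f : Module.End ℂ V) (g : Module.End ℂ W) (hf : IsNilpotent f) (hg : IsNilpotent g)
    (h : ∀ j, Module.finrank ℂ (LinearMap.ker (f ^ j)) = Module.finrank ℂ (LinearMap.ker (g ^ j))) :
    ∃ e : V ≃ₗ[ℂ] W, ∀ v, e (f v) = g (e v) := by
  obtain ⟨d, k, e, he⟩ := exists_cyc_decomposition f hf
  obtain ⟨d', k', e', he'⟩ := exists_cyc_decomposition g hg
  have hcard : ∀ p, Nonempty ({i // k i = p + 1} ≃ {i // k' i = p + 1}) := by
    intro p
    have := count_eq_of_sum_min_eq (Finset.univ.val.map k) (Finset.univ.val.map k') (by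
      intro j
      have := h j
      rw [finrank_ker_pow_of_decomposition f e he,
        finrank_ker_pow_of_decomposition g e' he'] at this
      rw [Multiset.map_map, Multiset.map_map]
      exact this) p
    rw [Multiset.count_map, Multiset.count_map] at this
    refine ⟨Fintype.equivOfCardEq ?_⟩
    rw [Fintype.card_subtype, Fintype.card_subtype]
    simpa [Finset.card_def, eq_comm] using this
  let E : (∀ i, CycMod (k i)) ≃ₗ[Polynomial ℂ] (∀ i, CycMod (k' i)) :=
    (sortCyc k).trans ((LinearEquiv.piCongrRight fun p =>
      LinearEquiv.funCongrLeft (Polynomial ℂ) (CycMod (p + 1)) (hcard p).some.symm).trans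
        (sortCyc k').symm)
  have hE : ∀ v, E (mulX _ v) = mulX _ (E v) := fun v => map_smul E _ v
  refine ⟨e.trans ((E.restrictScalars ℂ).trans e'.symm), fun v => ?_⟩
  apply e'.injective
  rw [he']
  simp only [LinearEquiv.trans_apply, LinearEquiv.restrictScalars_apply,
    LinearEquiv.apply_symm_apply]
  rw [he, hE]

/-- Every nilpotent endomorphism has a Jordan type. The partition consists of the nonzero sizes
in a cyclic decomposition. -/
theorem exists_partition_of_isNilpotent {V : Type} [AddCommGroup V] [Module ℂ V]
    [FiniteDimensional ℂ V] (f : Module.End ℂ V) (hf : IsNilpotent f) (m : ℕ)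
    (hm : Module.finrank ℂ V = m) :
    ∃ d : Nat.Partition m, ∀ j, Module.finrank ℂ (LinearMap.ker (f ^ j)) =
      (d.parts.map (fun p => min p j)).sum := by
  obtain ⟨d, k, e, he⟩ := exists_cyc_decomposition f hf
  refine ⟨Nat.Partition.ofSums m (Finset.univ.val.map k) ?_, fun j => ?_⟩
  · rw [← hm, e.finrank_eq, Module.finrank_pi_fintype]
    simp_rw [finrank_cycMod]
    rfl
  · rw [finrank_ker_pow_of_decomposition f e he]
    have : ∀ S : Multiset ℕ, ((S.filter (fun p => p ≠ 0)).map (fun p => min p j)).sum =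
        (S.map (fun p => min p j)).sum := by
      intro S
      induction S using Multiset.induction_on with
      | empty => simp
      | cons a S ih =>
        by_cases ha : a = 0
        · simpa [ha] using ih
        · rw [Multiset.filter_cons_of_pos (p := fun p => p ≠ 0) _ ha]
          simp [ih]
    rw [Nat.Partition.ofSums_parts, this, Multiset.map_map]
    rfl

/-! ### Realizing partitions by alternating forms -/

/-- `S` is the multiset of Jordan block sizes of some `X` that is infinitesimally skew for
some nondegenerate alternating form `A`. -/
def SkewRealizable (S : Multiset ℕ) : Prop :=
  ∃ (ι : Type) (_ : Fintype ι) (_ : DecidableEq ι) (A X : Matrix ι ι ℂ),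
    Aᵀ = -A ∧ IsUnit A.det ∧ Xᵀ * A + A * X = 0 ∧ Fintype.card ι = S.sum ∧
      ∀ j : ℕ, Module.finrank ℂ (LinearMap.ker (X.mulVecLin ^ j)) =
        (S.map (fun p => min p j)).sum

theorem finrank_ker_pow_prod {V W : Type*} [AddCommGroup V] [Module ℂ V] [FiniteDimensional ℂ V]
    [AddCommGroup W] [Module ℂ W] [FiniteDimensional ℂ W]
    (f : Module.End ℂ V) (g : Module.End ℂ W) (j : ℕ) :
    Module.finrank ℂ (LinearMap.ker ((f.prodMap g : Module.End ℂ (V × W)) ^ j)) =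
      Module.finrank ℂ (LinearMap.ker (f ^ j)) + Module.finrank ℂ (LinearMap.ker (g ^ j)) := by
  have hj : (f.prodMap g : Module.End ℂ (V × W)) ^ j = (f ^ j).prodMap (g ^ j) := by
    induction j with
    | zero => rfl
    | succ j ih => rw [pow_succ, ih, pow_succ, pow_succ]; rfl
  rw [hj, LinearMap.ker_prodMap, ← Module.finrank_prod]
  exact LinearEquiv.finrank_eq
    { toFun := fun x => (⟨x.1.1, x.2.1⟩, ⟨x.1.2, x.2.2⟩)
      invFun := fun y => ⟨(y.1.1, y.2.1), y.1.2, y.2.2⟩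
      map_add' := fun _ _ => rfl
      map_smul' := fun _ _ => rfl
      left_inv := fun _ => rfl
      right_inv := fun _ => rfl }

theorem finrank_ker_pow_fromBlocks {ι κ : Type} [Fintype ι] [DecidableEq ι] [Fintype κ]
    [DecidableEq κ] (X : Matrix ι ι ℂ) (Y : Matrix κ κ ℂ) (j : ℕ) :
    Module.finrank ℂ (LinearMap.ker ((fromBlocks X 0 0 Y).mulVecLin ^ j)) =
      Module.finrank ℂ (LinearMap.ker (X.mulVecLin ^ j)) +
        Module.finrank ℂ (LinearMap.ker (Y.mulVecLin ^ j)) := by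
  rw [← finrank_ker_pow_prod]
  refine finrank_ker_pow_of_equiv _ _ (LinearEquiv.sumArrowLequivProdArrow ι κ ℂ ℂ) (fun v => ?_) j
  rw [Matrix.mulVecLin_apply, Matrix.fromBlocks_mulVec]
  ext i <;> simp [LinearEquiv.sumArrowLequivProdArrow, Equiv.sumArrowEquivProdArrow]

/-- The orthogonal direct sum of two realizations. -/
theorem SkewRealizable.add {S T : Multiset ℕ} (hS : SkewRealizable S) (hT : SkewRealizable T) :
    SkewRealizable (S + T) := by
  obtain ⟨ι, _, _, A, X, hA, hAd, hX, hc, hk⟩ := hS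
  obtain ⟨κ, _, _, B, Y, hB, hBd, hY, hc', hk'⟩ := hT
  refine ⟨ι ⊕ κ, inferInstance, inferInstance, fromBlocks A 0 0 B, fromBlocks X 0 0 Y,
    ?_, ?_, ?_, ?_, fun j => ?_⟩
  · simp [Matrix.fromBlocks_transpose, Matrix.fromBlocks_neg, hA, hB]
  · rw [Matrix.det_fromBlocks_zero₁₂]; exact hAd.mul hBd
  · simp [Matrix.fromBlocks_transpose, Matrix.fromBlocks_multiply, Matrix.fromBlocks_add, hX, hY]
  · simp [hc, hc']
  · rw [finrank_ker_pow_fromBlocks, hk, hk', Multiset.map_add, Multiset.sum_add]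

/-- The nilpotent Jordan block of size `p`. -/
def jordanBlock (p : ℕ) : Matrix (Fin p) (Fin p) ℂ :=
  Matrix.of fun i j => if (i : ℕ) + 1 = j then 1 else 0

/-- The anti-diagonal matrix with alternating signs, for which the Jordan block is
infinitesimally skew. It is symmetric for odd `p` and alternating for even `p`. -/
def antiDiag (p : ℕ) : Matrix (Fin p) (Fin p) ℂ :=
  Matrix.of fun i j => if j = i.rev then (-1) ^ (i : ℕ) else 0

theorem jordanBlock_mulVec (p : ℕ) (v : Fin p → ℂ) (i : Fin p) :
    (jordanBlock p *ᵥ v) i = if h : (i : ℕ) + 1 < p then v ⟨i + 1, h⟩ else 0 := by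
  simp only [Matrix.mulVec, dotProduct, jordanBlock, Matrix.of_apply, ite_mul, one_mul, zero_mul]
  split_ifs with h
  · rw [Finset.sum_eq_single ⟨i + 1, h⟩]
    · simp
    · intro j _ hj
      rw [if_neg]
      intro h'
      exact hj (Fin.ext h'.symm)
    · simp
  · refine Finset.sum_eq_zero fun j _ => if_neg ?_
    omega

theorem finrank_ker_jordanBlock_pow (p j : ℕ) :
    Module.finrank ℂ (LinearMap.ker ((jordanBlock p).mulVecLin ^ j)) = min p j := by
  have := finrank_ker_pow_single (jordanBlock p).mulVecLin ?_ ?_ j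
  · rwa [Module.finrank_fin_fun] at this
  · rw [Module.finrank_fin_fun]
    have h : ∀ (k : ℕ) (v : Fin p → ℂ) (i : Fin p), p ≤ i + k →
        ((jordanBlock p).mulVecLin ^ k) v i = 0 := by
      intro k
      induction k with
      | zero => intro v i hi; omega
      | succ k ih =>
        intro v i hi
        rw [pow_succ', Module.End.mul_apply, Matrix.mulVecLin_apply, jordanBlock_mulVec]
        split_ifs with h
        · exact ih _ _ (by simp only; omega)
        · rfl
    ext v i
    simp only [LinearMap.comp_apply]
    rw [h p _ i (by omega)]
    rfl
  · rcases Nat.eq_zero_or_pos p with rfl | hp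
    · exact (Submodule.finrank_le _).trans (by simp)
    · refine finrank_le_one_of_forall_smul _ (Pi.single ⟨0, hp⟩ 1) fun w hw => ⟨w ⟨0, hp⟩, ?_⟩
      ext ⟨i, hi⟩
      rcases i with _ | i
      · simp
      · have h1 := congrFun (LinearMap.mem_ker.mp hw) ⟨i, by omega⟩
        rw [Matrix.mulVecLin_apply, jordanBlock_mulVec, dif_pos hi] at h1
        rw [h1]
        simp

/-- The Jordan block is infinitesimally skew for the form `antiDiag p`: both products are supported
on `i + j = p` (indices from `0`), where the signs are `(-1) ^ (i - 1)` and `(-1) ^ i`. -/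
theorem antiDiag_skew (p : ℕ) :
    (jordanBlock p)ᵀ * antiDiag p + antiDiag p * jordanBlock p = 0 := by
  ext i j
  have hrev : ∀ k : Fin p, (j = k.rev) = (k = j.rev) := by
    intro k
    rw [eq_iff_iff]
    constructor
    · rintro rfl; simp
    · rintro rfl; simp
  have h2 : (antiDiag p * jordanBlock p) i j = if (i.rev : ℕ) + 1 = j then (-1) ^ (i : ℕ) else 0 := by
    simp only [Matrix.mul_apply, jordanBlock, antiDiag, Matrix.of_apply, ite_mul, zero_mul]
    simp only [Finset.sum_ite_eq', Finset.mem_univ, if_true, mul_ite, mul_one, mul_zero]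
  rw [Matrix.add_apply, h2]
  simp only [Matrix.mul_apply, Matrix.transpose_apply, jordanBlock, antiDiag,
    Matrix.of_apply, hrev, mul_ite, mul_zero, ite_mul, zero_mul, Finset.sum_ite_eq', Finset.mem_univ,
    if_true, one_mul, Matrix.zero_apply, Fin.val_rev]
  have hi := i.2
  have hj := j.2
  by_cases h : (i : ℕ) + j = p
  · rw [if_pos (by omega), if_pos (by omega)]
    obtain ⟨q, hq⟩ : ∃ q, (i : ℕ) = q + 1 := ⟨i - 1, by omega⟩
    have : p - ((j : ℕ) + 1) = q := by omega
    rw [this, hq, pow_succ]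
    ring
  · rw [if_neg (by omega), if_neg (by omega), add_zero]

theorem antiDiag_transpose (p : ℕ) (hp : Even p) : (antiDiag p)ᵀ = -antiDiag p := by
  ext i j
  simp only [Matrix.transpose_apply, Matrix.neg_apply, antiDiag, Matrix.of_apply]
  have hi := i.2
  by_cases h : j = i.rev
  · subst h
    rw [if_pos (by simp), if_pos rfl, Fin.val_rev]
    obtain ⟨r, rfl⟩ := hp
    rcases Nat.even_or_odd (i : ℕ) with h | h
    · have h' : Odd (r + r - ((i : ℕ) + 1)) := by
        obtain ⟨s, hs⟩ := h
        exact ⟨r - s - 1, by omega⟩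
      rw [h.neg_one_pow, h'.neg_one_pow]
    · have h' : Even (r + r - ((i : ℕ) + 1)) := by
        obtain ⟨s, hs⟩ := h
        exact ⟨r - s - 1, by omega⟩
      rw [h.neg_one_pow, h'.neg_one_pow, neg_neg]
  · rw [if_neg h, if_neg, neg_zero]
    rintro rfl
    simp at h

theorem antiDiag_isUnit_det (p : ℕ) : IsUnit (antiDiag p).det := by
  apply Matrix.isUnit_det_of_right_inverse (B := (antiDiag p)ᵀ)
  ext i j
  simp only [Matrix.mul_apply, Matrix.transpose_apply, antiDiag, Matrix.of_apply, ite_mul, zero_mul,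
    Finset.sum_ite_eq', Finset.mem_univ, if_true, Matrix.one_apply, Fin.rev_inj]
  split_ifs with h
  · subst h
    rw [← mul_pow]; simp
  · simp

theorem skewRealizable_single (p : ℕ) (hp : Even p) : SkewRealizable {p} :=
  ⟨Fin p, inferInstance, inferInstance, antiDiag p, jordanBlock p, antiDiag_transpose p hp,
    antiDiag_isUnit_det p, antiDiag_skew p, by simp, fun j => by
      rw [finrank_ker_jordanBlock_pow]; simp⟩

/-- Two blocks of the same size `p` are realized on `ℂ^p × ℂ^p` with the alternating form
`((a, b), (c, d)) ↦ B(a, d) - B(c, b)`, where `B` has matrix `antiDiag p`; this works whatever the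
parity of `p`. -/
theorem skewRealizable_pair (p : ℕ) : SkewRealizable {p, p} := by
  refine ⟨Fin p ⊕ Fin p, inferInstance, inferInstance,
    fromBlocks 0 (antiDiag p) (-(antiDiag p)ᵀ) 0, fromBlocks (jordanBlock p) 0 0 (jordanBlock p),
    ?_, ?_, ?_, ?_, fun j => ?_⟩
  · simp [Matrix.fromBlocks_transpose, Matrix.fromBlocks_neg]
  · have hu := antiDiag_isUnit_det p
    apply Matrix.isUnit_det_of_right_inverse
      (B := fromBlocks 0 (-((antiDiag p)ᵀ)⁻¹) (antiDiag p)⁻¹ 0)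
    rw [Matrix.fromBlocks_multiply]
    simp [Matrix.mul_nonsing_inv _ hu, Matrix.mul_nonsing_inv _ (Matrix.isUnit_det_transpose _ hu)]
  · have h := antiDiag_skew p
    have h' := congrArg Matrix.transpose h
    simp only [Matrix.transpose_add, Matrix.transpose_mul, Matrix.transpose_transpose,
      Matrix.transpose_zero] at h'
    simp only [Matrix.fromBlocks_transpose, Matrix.fromBlocks_multiply, Matrix.fromBlocks_add,
      Matrix.transpose_zero, zero_mul, mul_zero, zero_add, add_zero, h]
    rw [Matrix.mul_neg, Matrix.neg_mul, ← neg_add, add_comm, h', neg_zero, Matrix.fromBlocks_zero]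
  · simp
  · rw [finrank_ker_pow_fromBlocks, finrank_ker_jordanBlock_pow]
    simp

theorem skewRealizable_zero : SkewRealizable 0 :=
  ⟨Fin 0, inferInstance, inferInstance, 0, 0, by simp, by simp, by simp, by simp, fun j => by
    have := Submodule.finrank_le (LinearMap.ker ((0 : Matrix (Fin 0) (Fin 0) ℂ).mulVecLin ^ j))
    simpa using this⟩

/-- Even parts are split off one at a time, odd parts in pairs. -/
theorem skewRealizable_of_even_count (S : Multiset ℕ)
    (hS : ∀ p, Odd p → Even (S.count p)) : SkewRealizable S := by
  induction S using Multiset.strongInductionOn with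
  | ih S ih =>
    rcases S.empty_or_exists_mem with rfl | ⟨a, ha⟩
    · exact skewRealizable_zero
    · obtain ⟨T, rfl⟩ := Multiset.exists_cons_of_mem ha
      rcases Nat.even_or_odd a with he | ho
      · rw [← Multiset.singleton_add]
        refine (skewRealizable_single a he).add (ih T (Multiset.lt_cons_self T a) fun p hp => ?_)
        have hpa : p ≠ a := by
          rintro rfl
          exact (Nat.not_even_iff_odd.mpr hp) he
        simpa [Multiset.count_cons_of_ne hpa] using hS p hp
      · have haT : a ∈ T := by
          rw [← Multiset.count_pos]
          have := hS a ho
          rw [Multiset.count_cons_self] at this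
          rcases Nat.eq_zero_or_pos (T.count a) with h | h
          · rw [h] at this; simp at this
          · exact h
        obtain ⟨U, rfl⟩ := Multiset.exists_cons_of_mem haT
        have : a ::ₘ a ::ₘ U = {a, a} + U := by
          simp
        rw [this]
        refine (skewRealizable_pair a).add (ih U ((Multiset.lt_cons_self U a).trans
          (Multiset.lt_cons_self _ a)) fun p hp => ?_)
        have h := hS p hp
        by_cases hpa : p = a
        · subst hpa
          rw [Multiset.count_cons_self, Multiset.count_cons_self, add_assoc] at h
          exact (Nat.even_add.mp h).mpr (by decide)
        · simpa [Multiset.count_cons_of_ne hpa] using h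

/-! ### Symplectic matrices -/

theorem sympJ_transpose (n : ℕ) : (sympJ n)ᵀ = -sympJ n := by
  ext i j
  simp only [Matrix.transpose_apply, Matrix.neg_apply, sympJ, Matrix.of_apply]
  split_ifs <;> first | omega | simp

/-- `J` is a signed permutation matrix, so `J * Jᵀ = 1`. -/
theorem sympJ_isUnit_det (n : ℕ) : IsUnit (sympJ n).det := by
  apply Matrix.isUnit_det_of_right_inverse (B := (sympJ n)ᵀ)
  -- `i'` is the column of the only nonzero entry of row `i`.
  have hJ : ∀ i : Fin (2 * n), ∃ i' : Fin (2 * n), ((i : ℕ) + n = i' ∨ (i' : ℕ) + n = i) ∧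
      ∀ j, sympJ n i j = if j = i' then (if (i : ℕ) < n then 1 else -1) else 0 := by
    intro i
    have hi := i.2
    by_cases h : (i : ℕ) < n
    · refine ⟨⟨i + n, by omega⟩, by simp, fun j => ?_⟩
      simp only [sympJ, Matrix.of_apply, Fin.ext_iff]
      split_ifs <;> first | omega | rfl
    · refine ⟨⟨i - n, by omega⟩, Or.inr (by simp only; omega), fun j => ?_⟩
      have hj := j.2
      simp only [sympJ, Matrix.of_apply, Fin.ext_iff]
      split_ifs <;> first | omega | rfl
  ext i j
  obtain ⟨i', hi', hi⟩ := hJ i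
  obtain ⟨j', hj', hj⟩ := hJ j
  simp only [Matrix.mul_apply, Matrix.transpose_apply, hi, hj, ite_mul, zero_mul,
    Finset.sum_ite_eq', Finset.mem_univ, if_true, Matrix.one_apply]
  simp only [Fin.ext_iff]
  have h1 := i.2
  have h2 := j.2
  have h3 := i'.2
  have h4 := j'.2
  split_ifs <;> first | omega | simp

theorem finrank_ker_pow_of_conj {N : ℕ} (g X Y : Matrix (Fin N) (Fin N) ℂ) (hg : IsUnit g.det)
    (h : g * X = Y * g) (j : ℕ) :
    Module.finrank ℂ (LinearMap.ker (X.mulVecLin ^ j)) =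
      Module.finrank ℂ (LinearMap.ker (Y.mulVecLin ^ j)) := by
  refine finrank_ker_pow_of_equiv _ _ (LinearEquiv.ofLinearMap g.mulVecLin g⁻¹.mulVecLin
    (by rw [← Matrix.mulVecLin_mul, Matrix.mul_nonsing_inv g hg, Matrix.mulVecLin_one])
    (by rw [← Matrix.mulVecLin_mul, Matrix.nonsing_inv_mul g hg, Matrix.mulVecLin_one]))
    (fun v => ?_) j
  change g *ᵥ (X *ᵥ v) = Y *ᵥ (g *ᵥ v)
  rw [Matrix.mulVec_mulVec, Matrix.mulVec_mulVec, h]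

theorem isNilpotent_mulVecLin_s1 {N : ℕ} {X : Matrix (Fin N) (Fin N) ℂ} (h : IsNilpotent X) :
    IsNilpotent X.mulVecLin := by
  obtain ⟨m, hm⟩ := h
  refine ⟨m, ?_⟩
  rw [← Matrix.toLin'_apply', ← Matrix.toLin'_pow, hm, map_zero]

/-- Conjugacy under `GL` of two nilpotent elements of `sp` can be upgraded to conjugacy under
`Sp`: the conjugating matrix `h` is corrected by a square root `s` of `h* h`, where `h*`
is the adjoint with respect to `J`. -/
theorem exists_symplectic_conj (n : ℕ) (h X Y : Matrix (Fin (2 * n)) (Fin (2 * n)) ℂ)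
    (hh : IsUnit h.det) (hX : X ∈ spSet n) (hY : Y ∈ spSet n) (hc : h * X = Y * h) :
    ∃ g ∈ SpSet n, g * X * g⁻¹ = Y := by
  have hJ := sympJ_isUnit_det n
  have hht : IsUnit hᵀ.det := Matrix.isUnit_det_transpose _ hh
  have hct : Xᵀ * hᵀ = hᵀ * Yᵀ := by
    rw [← Matrix.transpose_mul, hc, Matrix.transpose_mul]
  have hX' : Xᵀ * sympJ n + sympJ n * X = 0 := hX
  have hY' : Yᵀ * sympJ n + sympJ n * Y = 0 := hY
  have hBd : IsUnit (hᵀ * sympJ n * h).det := by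
    rw [Matrix.det_mul, Matrix.det_mul]; exact (hht.mul hJ).mul hh
  obtain ⟨s, hs, hcomm⟩ := exists_congr_of_skew (sympJ n) (hᵀ * sympJ n * h) (sympJ_transpose n)
    (by simp [Matrix.transpose_mul, sympJ_transpose, Matrix.mul_assoc]) hJ hBd
  have hXs : X * s = s * X := hcomm X hX' <| by
    calc Xᵀ * (hᵀ * sympJ n * h) + hᵀ * sympJ n * h * X
        = (Xᵀ * hᵀ) * sympJ n * h + hᵀ * sympJ n * (h * X) := by simp only [Matrix.mul_assoc]
      _ = hᵀ * (Yᵀ * sympJ n + sympJ n * Y) * h := by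
        rw [hct, hc]; simp only [Matrix.mul_assoc, Matrix.mul_add, Matrix.add_mul]
      _ = 0 := by rw [hY']; simp
  have hsd : IsUnit s.det := by
    rw [← hs, Matrix.det_mul] at hBd
    exact isUnit_of_mul_isUnit_right hBd
  have hst : IsUnit sᵀ.det := Matrix.isUnit_det_transpose _ hsd
  have hgd : IsUnit (h * s⁻¹).det := by
    rw [Matrix.det_mul]; exact hh.mul (Matrix.isUnit_nonsing_inv_det s hsd)
  refine ⟨h * s⁻¹, ?_, ?_⟩
  · change (h * s⁻¹)ᵀ * sympJ n * (h * s⁻¹) = sympJ n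
    calc (h * s⁻¹)ᵀ * sympJ n * (h * s⁻¹) = (sᵀ)⁻¹ * (hᵀ * sympJ n * h) * s⁻¹ := by
          rw [Matrix.transpose_mul, Matrix.transpose_nonsing_inv]; simp only [Matrix.mul_assoc]
      _ = ((sᵀ)⁻¹ * sᵀ) * sympJ n * (s * s⁻¹) := by rw [← hs]; simp only [Matrix.mul_assoc]
      _ = sympJ n := by
          rw [Matrix.nonsing_inv_mul _ hst, Matrix.mul_nonsing_inv _ hsd]; simp
  · have hXs' : s⁻¹ * X = X * s⁻¹ := by
      calc s⁻¹ * X = s⁻¹ * (X * s) * s⁻¹ := by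
            rw [Matrix.mul_assoc, Matrix.mul_nonsing_inv_cancel_right _ _ hsd]
        _ = X * s⁻¹ := by rw [hXs, Matrix.nonsing_inv_mul_cancel_left _ _ hsd]
    rw [Matrix.mul_assoc h, hXs', ← Matrix.mul_assoc, hc, Matrix.mul_assoc Y,
      Matrix.mul_nonsing_inv_cancel_right _ _ hgd]

/-- For even `q` the matrix `J * X ^ q` is skew-symmetric, so the rank of `X ^ q` is even. -/
theorem even_finrank_ker_of_mem_spSet (n : ℕ) (X : Matrix (Fin (2 * n)) (Fin (2 * n)) ℂ)
    (hX : X ∈ spSet n) (q : ℕ) (hq : Even q) :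
    Even (Module.finrank ℂ (LinearMap.ker (X.mulVecLin ^ q))) := by
  have hX' : Xᵀ * sympJ n = -(sympJ n * X) := eq_neg_of_add_eq_zero_left hX
  have hpow : ∀ q : ℕ, Xᵀ ^ q * sympJ n = (-1) ^ q • (sympJ n * X ^ q) := by
    intro q
    induction q with
    | zero => simp
    | succ q ih =>
      rw [pow_succ', Matrix.mul_assoc, ih, Matrix.mul_smul, ← Matrix.mul_assoc, hX', pow_succ',
        pow_succ']
      simp [Matrix.mul_assoc]
  have hrank := even_rank_of_skew_s1 (sympJ n * X ^ q) (by
    rw [Matrix.transpose_mul, Matrix.transpose_pow, sympJ_transpose, Matrix.mul_neg, hpow,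
      hq.neg_one_pow, one_smul])
  rw [Matrix.rank_mul_eq_right_of_isUnit_det _ _ (sympJ_isUnit_det n)] at hrank
  have h := LinearMap.finrank_range_add_finrank_ker (X ^ q).mulVecLin
  rw [Module.finrank_fin_fun, ← Matrix.rank, ← Matrix.toLin'_apply', Matrix.toLin'_pow,
    Matrix.toLin'_apply'] at h
  have h2 : Even ((X ^ q).rank + Module.finrank ℂ (LinearMap.ker (X.mulVecLin ^ q))) := by
    rw [h]; exact even_two_mul n
  exact (Nat.even_add.mp h2).mp hrank

theorem isNilpotent_of_jordanType {N : ℕ} (X : Matrix (Fin N) (Fin N) ℂ) (d : Nat.Partition N)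
    (h : MatJordanType X d) : IsNilpotent X := by
  refine ⟨N, ?_⟩
  have hN := h N
  have hmin : d.parts.map (fun p => min p N) = d.parts := by
    conv_rhs => rw [← Multiset.map_id d.parts]
    refine Multiset.map_congr rfl fun p hp => min_eq_left ?_
    exact (Multiset.le_sum_of_mem hp).trans d.parts_sum.le
  rw [hmin, d.parts_sum] at hN
  have htop : LinearMap.ker (X.mulVecLin ^ N) = ⊤ :=
    Submodule.eq_top_of_finrank_eq (by rw [hN, Module.finrank_fin_fun])
  rw [LinearMap.ker_eq_top, ← Matrix.toLin'_apply', ← Matrix.toLin'_pow] at htop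
  exact (LinearEquiv.map_eq_zero_iff _).mp htop

/-- An alternating form that realizes `d` is congruent to `J`, and the congruence transports `X`
into `sp(2n, ℂ)`. -/
theorem exists_mem_spSet_of_skewRealizable (n : ℕ) (d : Nat.Partition (2 * n))
    (h : SkewRealizable d.parts) : ∃ X ∈ spSet n, MatJordanType X d := by
  obtain ⟨ι, _, _, A, X, hA, hAd, hX, hcard, hk⟩ := h
  rw [d.parts_sum] at hcard
  let e : ι ≃ Fin (2 * n) := Fintype.equivFinOfCardEq hcard
  have hskew : (X.submatrix e.symm e.symm)ᵀ * A.submatrix e.symm e.symm +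
      A.submatrix e.symm e.symm * X.submatrix e.symm e.symm = 0 := by
    rw [Matrix.transpose_submatrix, Matrix.submatrix_mul_equiv, Matrix.submatrix_mul_equiv]
    exact congrArg (fun M => M.submatrix e.symm e.symm) hX
  have hker : ∀ j, Module.finrank ℂ (LinearMap.ker ((X.submatrix e.symm e.symm).mulVecLin ^ j)) =
      (d.parts.map (fun p => min p j)).sum := by
    intro j
    rw [← hk]
    refine (finrank_ker_pow_of_equiv _ _ (LinearEquiv.funCongrLeft ℂ ℂ e.symm) (fun v => ?_) j).symm
    ext i
    simp [LinearEquiv.funCongrLeft_apply, LinearMap.funLeft_apply,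
      Matrix.submatrix_mulVec_equiv, Function.comp_def]
  obtain ⟨s, hs, -⟩ := exists_congr_of_skew (sympJ n) (A.submatrix e.symm e.symm)
    (sympJ_transpose n) (by rw [Matrix.transpose_submatrix, hA]; rfl) (sympJ_isUnit_det n)
    (by rwa [Matrix.det_submatrix_equiv_self])
  have hsd : IsUnit s.det := by
    have : IsUnit (A.submatrix e.symm e.symm).det := by rwa [Matrix.det_submatrix_equiv_self]
    rw [← hs, Matrix.det_mul] at this
    exact isUnit_of_mul_isUnit_right this
  have hst : IsUnit sᵀ.det := Matrix.isUnit_det_transpose _ hsd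
  generalize X.submatrix e.symm e.symm = Z at hskew hker
  refine ⟨s * Z * s⁻¹, ?_, fun j => ?_⟩
  · change (s * Z * s⁻¹)ᵀ * sympJ n + sympJ n * (s * Z * s⁻¹) = 0
    rw [← hs] at hskew
    calc (s * Z * s⁻¹)ᵀ * sympJ n + sympJ n * (s * Z * s⁻¹)
        = (sᵀ)⁻¹ * Zᵀ * sᵀ * sympJ n * (s * s⁻¹) +
            ((sᵀ)⁻¹ * sᵀ) * sympJ n * (s * Z * s⁻¹) := by
          rw [Matrix.nonsing_inv_mul _ hst, Matrix.mul_nonsing_inv _ hsd, Matrix.transpose_mul,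
            Matrix.transpose_mul, Matrix.transpose_nonsing_inv]
          simp only [Matrix.mul_assoc, Matrix.mul_one, Matrix.one_mul]
      _ = (sᵀ)⁻¹ * (Zᵀ * (sᵀ * sympJ n * s) + sᵀ * sympJ n * s * Z) * s⁻¹ := by
          simp only [Matrix.mul_assoc, Matrix.mul_add, Matrix.add_mul]
      _ = 0 := by rw [hskew]; simp
  · rw [← hker j]
    exact (finrank_ker_pow_of_conj s Z _ hsd
      (by rw [Matrix.nonsing_inv_mul_cancel_right _ _ hsd]) j).symm

/-- Two nilpotent elements of `sp(2n, ℂ)` are conjugate under `Sp(2n, ℂ)` if and only if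
they have the same Jordan type; moreover, a partition of `2n` is the Jordan type of a
nilpotent element of `sp(2n, ℂ)` if and only if it is `(-1)`-admissible.  (Together, these
say that the Jordan type induces a bijection between the set of nilpotent
`Sp(2n, ℂ)`-orbits in `sp(2n, ℂ)` and the set of `(-1)`-admissible partitions of `2n`.) -/
theorem spNilpotentOrbitClassification (n : ℕ) (hn : 1 ≤ n) :
    (∀ X ∈ spSet n, ∀ Y ∈ spSet n, IsNilpotent X → IsNilpotent Y →
      ((∃ g ∈ SpSet n, g * X * g⁻¹ = Y) ↔
        ∃ d : Nat.Partition (2 * n), MatJordanType X d ∧ MatJordanType Y d))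
    ∧ (∀ d : Nat.Partition (2 * n),
        (∃ X ∈ spSet n, IsNilpotent X ∧ MatJordanType X d) ↔
          EpsAdmissible (-1) d) := by
  refine ⟨fun X hX Y hY hXn hYn => ⟨?_, ?_⟩, fun d => ⟨?_, ?_⟩⟩
  · rintro ⟨g, hg, rfl⟩
    have hgd : IsUnit g.det := by
      have hJ := sympJ_isUnit_det n
      have hg' : gᵀ * sympJ n * g = sympJ n := hg
      rw [← hg', Matrix.det_mul] at hJ
      exact isUnit_of_mul_isUnit_right hJ
    obtain ⟨d, hd⟩ := exists_partition_of_isNilpotent X.mulVecLin (isNilpotent_mulVecLin_s1 hXn)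
      (2 * n) (Module.finrank_fin_fun ℂ)
    refine ⟨d, hd, fun j => ?_⟩
    rw [← hd j]
    exact (finrank_ker_pow_of_conj g X _ hgd
      (by rw [Matrix.nonsing_inv_mul_cancel_right _ _ hgd]) j).symm
  · rintro ⟨d, hdX, hdY⟩
    obtain ⟨e, he⟩ := exists_equiv_of_finrank_ker_pow_eq X.mulVecLin Y.mulVecLin
      (isNilpotent_mulVecLin_s1 hXn) (isNilpotent_mulVecLin_s1 hYn)
      (fun j => (hdX j).trans (hdY j).symm)
    refine exists_symplectic_conj n (LinearMap.toMatrix' e.toLinearMap) X Y ?_ hX hY ?_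
    · rw [LinearMap.det_toMatrix']
      exact LinearEquiv.isUnit_det' e
    · apply Matrix.toLin'.injective
      refine LinearMap.ext fun v => ?_
      rw [Matrix.toLin'_mul, Matrix.toLin'_mul, Matrix.toLin'_toMatrix']
      exact he v
  · rintro ⟨X, hX, -, hd⟩ p hp
    have hp : Odd p := by simpa using hp
    obtain ⟨q, rfl⟩ := hp
    -- The multiplicity of `2 * q + 1` has the parity of `dim ker X ^ (2 * q)` plus
    -- `dim ker X ^ (2 * q + 2)`, and both dimensions are even.
    have h := two_mul_sum_min d.parts (2 * q)
    rw [← hd (2 * q), ← hd (2 * q + 2)] at h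
    have h1 := even_finrank_ker_of_mem_spSet n X hX (2 * q) (even_two_mul q)
    have h2 := even_finrank_ker_of_mem_spSet n X hX (2 * q + 2) (even_two_mul (q + 1))
    have h3 := (h1.add h2)
    have h4 := h ▸ even_two_mul (d.parts.map fun x => min x (2 * q + 1)).sum
    exact (Nat.even_add.mp h4).mp h3
  · intro hd
    obtain ⟨X, hX, hXd⟩ := exists_mem_spSet_of_skewRealizable n d
      (skewRealizable_of_even_count d.parts fun p hp => hd p (Or.inr ⟨rfl, hp⟩))
    exact ⟨X, hX, isNilpotent_of_jordanType X d hXd, hXd⟩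
end
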